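/- arXiv:1510.05589 — 3 statements merged into one kernel-verified Lean document; each statement's English description precedes it below -/
import Mathlib

section
/- Let K be a nonempty compact metrizable space whose fd-height is finite, i.e. equal to some natural number. Then the closed unit interval I = [0,1] ℓ-dominates K; that is, there exists a continuous linear map of C_p(I) onto C_p(K). -/
open Set Function

noncomputable section

/-- Topology of pointwise convergence on `C(X, ℝ)`. -/
def ptTop (X : Type*) [TopologicalSpace X] : TopologicalSpace C(X, ℝ) :=
  TopologicalSpace.induced (fun f => (f : X → ℝ)) Pi.topologicalSpace

/-- `X` ℓ-dominates `Y`: a continuous linear map of `C_p(X)` onto `C_p(Y)`. -/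
def LDominates (X Y : Type*) [TopologicalSpace X] [TopologicalSpace Y] : Prop :=
  ∃ L : C(X, ℝ) →ₗ[ℝ] C(Y, ℝ), @Continuous _ _ (ptTop X) (ptTop Y) L ∧ Surjective L

/-- Covering dimension at most `n`. -/
def CovDimLE (X : Type*) [TopologicalSpace X] (n : ℕ) : Prop :=
  ∀ (ι : Type) (U : ι → Set X), Finite ι → (∀ i, IsOpen (U i)) → (⋃ i, U i) = univ →
    ∃ V : ι → Set X, (∀ i, IsOpen (V i)) ∧ (∀ i, V i ⊆ U i) ∧ (⋃ i, V i) = univ ∧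
      ∀ x : X, {i | x ∈ V i}.ncard ≤ n + 1

/-- Finite (covering) dimensional space. -/
def FinDimSpace (X : Type*) [TopologicalSpace X] : Prop := ∃ n : ℕ, CovDimLE X n

/-- Strongly countable dimensional space. -/
def StronglyCountableDim (X : Type*) [TopologicalSpace X] : Prop :=
  ∃ F : ℕ → Set X, (∀ n, IsClosed (F n)) ∧ (∀ n, FinDimSpace ↥(F n)) ∧ (⋃ n, F n) = univ

/-- `I(S)` relative to a subset: points of `S` with a relatively open
finite dimensional neighbourhood in `S`. -/
def fdI (X : Type*) [TopologicalSpace X] (S : Set X) : Set X :=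
  {x | x ∈ S ∧ ∃ U : Set X, IsOpen U ∧ x ∈ U ∧ FinDimSpace ↥(U ∩ S)}

/-- The transfinite derived sets `K^[α]`. -/
def fdDerived (X : Type*) [TopologicalSpace X] : Ordinal → Set X := fun o =>
  Ordinal.limitRecOn o (univ : Set X)
    (fun _ S => S \ fdI X S)
    (fun o _ ih => ⋂ (o' : Ordinal) (h : o' < o), ih o' h)

/-- A k_ω sequence for `X`. -/
def IsKOmegaSeq (X : Type*) [TopologicalSpace X] (K : ℕ → Set X) : Prop :=
  (∀ n, IsCompact (K n)) ∧ (∀ n, K n ⊆ K (n + 1)) ∧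
  (∀ C : Set X, IsCompact C → ∃ n, C ⊆ K n) ∧
  (∀ A : Set X, (∀ n, ∃ F : Set X, IsClosed F ∧ A ∩ K n = F ∩ K n) → IsClosed A)

def KOmegaSpace (X : Type*) [TopologicalSpace X] : Prop := ∃ K : ℕ → Set X, IsKOmegaSeq X K

/-- Submetrizable: there is a coarser metrizable topology. -/
def Submetrizable (X : Type*) [TopologicalSpace X] : Prop :=
  ∃ t' : TopologicalSpace X, (∀ s : Set X, @IsOpen X t' s → IsOpen s) ∧
    @TopologicalSpace.MetrizableSpace X t'

def Hemicompact (X : Type*) [TopologicalSpace X] : Prop :=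
  ∃ K : ℕ → Set X, (∀ n, IsCompact (K n)) ∧ ∀ C : Set X, IsCompact C → ∃ n, C ⊆ K n

/-- `B` is (functionally) bounded in `X`. -/
def CBounded (X : Type*) [TopologicalSpace X] (B : Set X) : Prop :=
  ∀ f : C(X, ℝ), ∃ M : ℝ, ∀ x ∈ B, |f x| ≤ M

/-- μ-space: closed bounded subsets are compact. -/
def MuSpace (X : Type*) [TopologicalSpace X] : Prop :=
  ∀ B : Set X, IsClosed B → CBounded X B → IsCompact B

/-- `C(K; A)`: continuous functions vanishing on `A`, as a submodule. -/
def Czero (K : Type*) [TopologicalSpace K] (A : Set K) : Submodule ℝ C(K, ℝ) where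
  carrier := {f | ∀ x ∈ A, f x = 0}
  add_mem' := by intro f g hf hg x hx; simp [hf x hx, hg x hx]
  zero_mem' := by intro x hx; simp
  smul_mem' := by intro c f hf x hx; simp [hf x hx]

/-- Pointwise topology on `C(K;A)`. -/
def ptTopSub {K : Type*} [TopologicalSpace K] (A : Set K) :
    TopologicalSpace (Czero K A) :=
  TopologicalSpace.induced (fun f => (f : C(K, ℝ))) (ptTop K)

/-- `c`-good map between relative function spaces. -/
def IsCGood {K₁ K₂ : Type*} [TopologicalSpace K₁] [CompactSpace K₁]
    [TopologicalSpace K₂] [CompactSpace K₂] (A₁ : Set K₁) (A₂ : Set K₂) (c : ℝ)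
    (L : Czero K₁ A₁ →ₗ[ℝ] Czero K₂ A₂) : Prop :=
  @Continuous _ _ (ptTopSub A₁) (ptTopSub A₂) L ∧
  (∀ g : Czero K₁ A₁, ‖(L g : C(K₂, ℝ))‖ ≤ ‖(g : C(K₁, ℝ))‖) ∧
  (∀ f : Czero K₂ A₂, ∃ g : Czero K₁ A₁, L g = f ∧
    ‖(g : C(K₁, ℝ))‖ ≤ c * ‖(f : C(K₂, ℝ))‖)

/-- `c`-good map between full function spaces. -/
def IsCGoodMap {K₁ K₂ : Type*} [TopologicalSpace K₁] [CompactSpace K₁]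
    [TopologicalSpace K₂] [CompactSpace K₂] (c : ℝ)
    (L : C(K₁, ℝ) →ₗ[ℝ] C(K₂, ℝ)) : Prop :=
  @Continuous _ _ (ptTop K₁) (ptTop K₂) L ∧
  (∀ g : C(K₁, ℝ), ‖L g‖ ≤ ‖g‖) ∧
  (∀ f : C(K₂, ℝ), ∃ g : C(K₁, ℝ), L g = f ∧ ‖g‖ ≤ c * ‖f‖)



namespace FdAux

open Topology Filter

def ck (m k : ℕ) (s : ℝ) : ℝ := max 0 (min (m * s - k) 1)

lemma ck_mono (m k : ℕ) : Monotone (ck m k) := by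
  intro a b hab
  unfold ck
  have : (m : ℝ) * a ≤ m * b := mul_le_mul_of_nonneg_left hab (Nat.cast_nonneg m)
  exact max_le_max le_rfl (min_le_min (by linarith) le_rfl)

lemma ck_cont (m k : ℕ) : Continuous (ck m k) := by
  unfold ck; fun_prop

def pS (p : ℕ → ℝ) (i : ℕ) : ℝ := ∑ j ∈ Finset.range i, p j

def wt (m k : ℕ) (p : ℕ → ℝ) (i : ℕ) : ℝ := ck m k (pS p (i+1)) - ck m k (pS p i)

lemma pS_succ (p : ℕ → ℝ) (i : ℕ) : pS p (i+1) = pS p i + p i := by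
  simp [pS, Finset.sum_range_succ]

lemma wt_nonneg (m k : ℕ) (p : ℕ → ℝ) (hp : ∀ j, 0 ≤ p j) (i : ℕ) : 0 ≤ wt m k p i := by
  unfold wt
  have := ck_mono m k (show pS p i ≤ pS p (i+1) by rw [pS_succ]; linarith [hp i])
  linarith

lemma wt_ne (m k : ℕ) (p : ℕ → ℝ) (i : ℕ) (h : wt m k p i ≠ 0) : p i ≠ 0 := by
  intro h0
  apply h
  simp [wt, pS_succ, h0]

lemma wt_sum (m k N : ℕ) (p : ℕ → ℝ) (hk : k < m) (hS : pS p N = 1) :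
    ∑ i ∈ Finset.range N, wt m k p i = 1 := by
  unfold wt
  rw [Finset.sum_range_sub (fun i => ck m k (pS p i)), hS]
  have h1 : (k : ℝ) + 1 ≤ m := by exact_mod_cast hk
  have h2 : pS p 0 = 0 := by simp [pS]
  rw [h2]
  unfold ck
  rw [min_eq_right (by linarith), max_eq_right (by norm_num), max_eq_left]
  · simp
  · exact (min_le_left _ _).trans (by simp)

lemma wt_bad (m N : ℕ) (p : ℕ → ℝ) (hS : pS p N = 1) :
    ((Finset.range m).filter (fun k => ∀ i < N, wt m k p i ≠ 1)).card ≤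
      ((Finset.range N).filter (fun i => p i ≠ 0)).card := by
  refine Finset.card_le_card_of_forall_subsingleton
    (fun (k i : ℕ) => (k : ℝ) < m * pS p (i+1) ∧ m * pS p (i+1) < k + 1) ?_ ?_
  · intro k hk
    simp only [Finset.mem_filter, Finset.mem_range] at hk
    obtain ⟨hkm, hk⟩ := hk
    have h1 : (k : ℝ) < m := by exact_mod_cast hkm
    have hN : N ≠ 0 := by rintro rfl; simp [pS] at hS
    have hex : ∃ i, (k : ℝ) < m * pS p (i+1) := ⟨N - 1, by
      rw [Nat.sub_add_cancel (Nat.pos_of_ne_zero hN), hS]; simpa using h1⟩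
    classical
    obtain ⟨i, hi, hmin⟩ : ∃ i, (k : ℝ) < m * pS p (i+1) ∧ ∀ j < i, ¬ (k : ℝ) < m * pS p (j+1) :=
      ⟨Nat.find hex, Nat.find_spec hex, fun j hj => Nat.find_min hex hj⟩
    have hiN : i < N := by
      by_contra h
      push Not at h
      apply hmin (N-1) (by omega)
      rw [Nat.sub_add_cancel (Nat.pos_of_ne_zero hN), hS]; simpa using h1
    have hle : m * pS p i ≤ k := by
      rcases i with _ | i
      · simp [pS]
      · exact not_lt.1 (hmin i (by omega))
    refine ⟨i, ?_, hi, ?_⟩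
    · simp only [Finset.mem_filter, Finset.mem_range]
      refine ⟨hiN, fun h0 => ?_⟩
      rw [pS_succ, h0, add_zero] at hi
      linarith
    · by_contra hge
      push Not at hge
      apply hk i hiN
      unfold wt ck
      rw [min_eq_right (by linarith), max_eq_right (by norm_num), max_eq_left]
      · simp
      · exact (min_le_left _ _).trans (by linarith)
  · intro i _ k hk k' hk'
    obtain ⟨_, h1, h2⟩ := hk
    obtain ⟨_, h3, h4⟩ := hk'
    have a : (k : ℝ) < k' + 1 := by linarith
    have b : (k' : ℝ) < k + 1 := by linarith
    have a' : k < k' + 1 := by exact_mod_cast a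
    have b' : k' < k + 1 := by exact_mod_cast b
    omega

lemma exists_inj_choice {α : Type*} (S : ℕ → Set α) (hS : ∀ i, (S i).Infinite) (N : ℕ) :
    ∃ c : ℕ → α, (∀ i, c i ∈ S i) ∧ InjOn c (Set.Iio N) := by
  induction N with
  | zero => exact ⟨fun i => (hS i).nonempty.some, fun i => (hS i).nonempty.some_mem, by simp⟩
  | succ N ih =>
    obtain ⟨c, hc, hinj⟩ := ih
    obtain ⟨z, hz, hz'⟩ := ((hS N).sdiff ((Set.finite_Iio N).image c)).nonempty
    classical
    refine ⟨Function.update c N z, fun i => ?_, ?_⟩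
    · by_cases h : i = N
      · subst h; simpa using hz
      · simpa [h] using hc i
    · intro i hi j hj hij
      simp only [mem_Iio] at hi hj
      by_cases h : i = N <;> by_cases h' : j = N
      · omega
      · subst h
        rw [Function.update_self, Function.update_of_ne h'] at hij
        exact absurd ⟨j, by simp only [mem_Iio]; omega, hij.symm⟩ hz'
      · subst h'
        rw [Function.update_self, Function.update_of_ne h] at hij
        exact absurd ⟨i, by simp only [mem_Iio]; omega, hij⟩ hz'
      · rw [Function.update_of_ne h, Function.update_of_ne h'] at hij
        exact hinj (by simp only [mem_Iio]; omega) (by simp only [mem_Iio]; omega) hij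

lemma ball_inf (z : unitInterval) (η : ℝ) (hη : 0 < η) : (Metric.ball z η).Infinite :=
  infinite_of_mem_nhds z (Metric.ball_mem_nhds z hη)

/-- small partitions of unity of bounded order -/
lemma exists_pou {K : Type*} [MetricSpace K] [CompactSpace K] {n : ℕ} (h : CovDimLE K n)
    (ε : ℝ) (hε : 0 < ε) :
    ∃ (N : ℕ) (p : ℕ → C(K, ℝ)), (∀ j x, 0 ≤ p j x) ∧ (∀ x, pS (fun j => p j x) N = 1) ∧
      (∀ x, ((Finset.range N).filter (fun i => p i x ≠ 0)).card ≤ n + 1) ∧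
      (∀ j x y, p j x ≠ 0 → p j y ≠ 0 → dist x y < ε) := by
  obtain ⟨t, ht⟩ := isCompact_univ.elim_finite_subcover (fun x : K => Metric.ball x (ε/2))
    (fun x => Metric.isOpen_ball) (fun x _ => mem_iUnion.2 ⟨x, Metric.mem_ball_self (by linarith)⟩)
  let e := t.equivFin
  obtain ⟨V, hVo, hVU, hVc, hVn⟩ := h (Fin t.card)
    (fun i => Metric.ball ((e.symm i : t) : K) (ε/2)) inferInstance
    (fun i => Metric.isOpen_ball) (by
      rw [eq_univ_iff_forall]
      intro x
      obtain ⟨y, hy, hxy⟩ := mem_iUnion₂.1 (ht (mem_univ x))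
      exact mem_iUnion.2 ⟨e ⟨y, hy⟩, by simpa using hxy⟩)
  obtain ⟨ρ, hρ⟩ := PartitionOfUnity.exists_isSubordinate isClosed_univ V hVo hVc.ge
  have hρV : ∀ i x, ρ i x ≠ 0 → x ∈ V i := fun i x hx => hρ i (subset_tsupport _ hx)
  refine ⟨t.card, fun j => if hj : j < t.card then ρ ⟨j, hj⟩ else 0, ?_, ?_, ?_, ?_⟩
  · intro j x
    dsimp only
    split_ifs with hj
    · exact ρ.nonneg _ _
    · simp
  · intro x
    unfold pS
    rw [Finset.sum_range]
    simp only [Fin.is_lt, dite_true, Fin.eta]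
    rw [← finsum_eq_sum_of_fintype]
    exact ρ.sum_eq_one (mem_univ x)
  · intro x
    refine le_trans ?_ (hVn x)
    rw [← Set.ncard_image_of_injective _ Fin.val_injective, ← Set.ncard_coe_finset]
    refine Set.ncard_le_ncard ?_ (Set.toFinite _)
    intro j hj
    simp only [Finset.coe_filter, Finset.mem_range, mem_ofPred_eq] at hj
    obtain ⟨hj, hj'⟩ := hj
    rw [dif_pos hj] at hj'
    exact ⟨⟨j, hj⟩, hρV _ _ hj', rfl⟩
  · intro j x y hx hy
    dsimp only at hx hy
    split_ifs at hx hy with hj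
    · have a := hVU _ (hρV _ _ hx)
      have b := hVU _ (hρV _ _ hy)
      rw [Metric.mem_ball] at a b
      linarith [dist_triangle_right x y ((e.symm ⟨j, hj⟩ : t) : K)]
    · simp at hx

lemma kol_dense {K : Type*} [MetricSpace K] [CompactSpace K] {n : ℕ} (h : CovDimLE K n)
    (m : ℕ) (hm : m = 8 * (n+1)) (f : C(K, ℝ)) (hf : 0 < ‖f‖) (φ : Fin m → C(K, unitInterval))
    (η : ℝ) (hη : 0 < η) :
    ∃ φ' : Fin m → C(K, unitInterval), dist φ' φ < η ∧ ∃ g : Fin m → C(unitInterval, ℝ),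
      (∀ k, ‖g k‖ ≤ ‖f‖ / m) ∧ ‖f - ∑ k, (g k).comp (φ' k)‖ < ‖f‖ / 2 := by
  have hm0 : (0:ℝ) < m := by rw [hm]; positivity
  -- uniform continuity
  obtain ⟨ε1, hε1, hu1⟩ := Metric.uniformContinuous_iff.1
    (CompactSpace.uniformContinuous_of_continuous f.continuous) (‖f‖/8) (by positivity)
  have hcΦ : Continuous (fun x => fun k => φ k x) := continuous_pi fun k => (φ k).continuous
  obtain ⟨ε2, hε2, hu2⟩ := Metric.uniformContinuous_iff.1
    (CompactSpace.uniformContinuous_of_continuous hcΦ) (η/4) (by positivity)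
  obtain ⟨N, p, hp0, hp1, hpn, hpd⟩ := exists_pou h (min ε1 ε2) (lt_min hε1 hε2)
  have hK : Nonempty K := by
    by_contra hK
    rw [not_nonempty_iff] at hK
    have : f = 0 := by ext x; exact hK.elim x
    simp [this] at hf
  -- points
  have hpt : ∀ j, ∃ z : K, (∃ x, p j x ≠ 0) → p j z ≠ 0 := by
    intro j
    by_cases hx : ∃ x, p j x ≠ 0
    · exact ⟨hx.choose, fun _ => hx.choose_spec⟩
    · exact ⟨hK.some, fun h => absurd h hx⟩
  choose z hz using hpt
  have hz1 : ∀ j x, p j x ≠ 0 → |f x - f (z j)| < ‖f‖/8 := fun j x hx =>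
    hu1 ((hpd j x (z j) hx (hz j ⟨x, hx⟩)).trans_le (min_le_left _ _))
  have hz2 : ∀ j x k, p j x ≠ 0 → dist (φ k (z j)) (φ k x) < η/4 := fun j x k hx =>
    (dist_le_pi_dist _ _ k).trans_lt
      (hu2 ((hpd j (z j) x (hz j ⟨x, hx⟩) hx).trans_le (min_le_right _ _)))
  have hc : ∀ k : Fin m, ∃ c : ℕ → unitInterval, (∀ j, dist (c j) (φ k (z j)) < η/4) ∧
      InjOn c (Iio N) := fun k =>
    exists_inj_choice (fun j => Metric.ball (φ k (z j)) (η/4)) (fun j => ball_inf _ _ (by positivity)) N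
  choose c hcd hcinj using hc
  -- weights
  let w : Fin m → ℕ → K → ℝ := fun k i x => wt m k (fun j => p j x) i
  have hwc : ∀ k i, Continuous (w k i) := by
    intro k i
    have : ∀ i, Continuous (fun x => pS (fun j => p j x) i) := fun i => by
      unfold pS; fun_prop
    exact ((ck_cont m k).comp (this _)).sub ((ck_cont m k).comp (this _))
  have hw0 : ∀ k i x, 0 ≤ w k i x := fun k i x => wt_nonneg _ _ _ (fun j => hp0 j x) i
  have hw1 : ∀ k x, ∑ i ∈ Finset.range N, w k i x = 1 := fun k x => wt_sum _ _ _ _ k.2 (hp1 x)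
  have hwp : ∀ k i x, w k i x ≠ 0 → p i x ≠ 0 := fun k i x hx => wt_ne _ _ _ _ hx
  have hmem : ∀ k x, ∑ i ∈ Finset.range N, w k i x * (c k i : ℝ) ∈ unitInterval := by
    intro k x
    have := (convex_Icc (0:ℝ) 1).sum_mem (t := Finset.range N) (w := fun i => w k i x)
      (z := fun i => (c k i : ℝ)) (fun i _ => hw0 k i x) (hw1 k x) (fun i _ => (c k i).2)
    simpa using this
  let φ' : Fin m → C(K, unitInterval) := fun k =>
    ⟨fun x => ⟨∑ i ∈ Finset.range N, w k i x * (c k i : ℝ), hmem k x⟩, by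
      refine Continuous.subtype_mk ?_ _
      exact continuous_finsetSum _ fun i _ => (hwc k i).mul continuous_const⟩
  have hφ'1 : ∀ k x i, i < N → w k i x = 1 → φ' k x = c k i := by
    intro k x i hi hwi
    apply Subtype.ext
    change ∑ i ∈ Finset.range N, w k i x * (c k i : ℝ) = _
    have hz : ∀ j ∈ Finset.range N, j ≠ i → w k j x = 0 := by
      intro j hj hji
      have h1 := hw1 k x
      rw [← Finset.add_sum_erase _ _ (Finset.mem_range.2 hi), hwi] at h1
      have h2 : ∑ i ∈ (Finset.range N).erase i, w k i x = 0 := by linarith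
      exact (Finset.sum_eq_zero_iff_of_nonneg (fun j _ => hw0 k j x)).1 h2 j
        (Finset.mem_erase.2 ⟨hji, hj⟩)
    rw [Finset.sum_eq_single i (fun j hj hji => by rw [hz j hj hji, zero_mul])
      (fun h => absurd (Finset.mem_range.2 hi) h), hwi, one_mul]
  refine ⟨φ', ?_, ?_⟩
  · refine lt_of_le_of_lt ((dist_pi_le_iff (by positivity : 0 ≤ η/2)).2 fun k => ?_) (by linarith)
    refine (ContinuousMap.dist_le (by positivity)).2 fun x => ?_
    rw [Subtype.dist_eq]
    have hconv : Convex ℝ (Metric.closedBall ((φ k x : ℝ)) (η/2)) := convex_closedBall _ _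
    have hb : ∀ i, w k i x ≠ 0 → (c k i : ℝ) ∈ Metric.closedBall ((φ k x : ℝ)) (η/2) := by
      intro i hi
      have h1 := hz2 i x k (hwp k i x hi)
      have h2 := hcd k i
      rw [Metric.mem_closedBall, ← Subtype.dist_eq]
      linarith [dist_triangle (c k i) (φ k (z i)) (φ k x)]
    have hsum : ∑ i ∈ (Finset.range N).filter (fun i => w k i x ≠ 0), w k i x * (c k i : ℝ)
        = ∑ i ∈ Finset.range N, w k i x * (c k i : ℝ) := by
      rw [Finset.sum_filter]
      refine Finset.sum_congr rfl fun i _ => ?_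
      split_ifs with hi
      · rfl
      · push Not at hi; rw [hi, zero_mul]
    have := hconv.sum_mem (t := (Finset.range N).filter (fun i => w k i x ≠ 0))
      (w := fun i => w k i x) (z := fun i => (c k i : ℝ)) (fun i _ => hw0 k i x)
      (by rw [Finset.sum_filter_ne_zero]; exact hw1 k x)
      (fun i hi => hb i (Finset.mem_filter.1 hi).2)
    simp only [smul_eq_mul] at this
    rw [hsum] at this
    exact this
  · have hg : ∀ k : Fin m, ∃ g : C(unitInterval, ℝ), ‖g‖ ≤ ‖f‖/m ∧
        ∀ i < N, g (c k i) = f (z i) / m := by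
      intro k
      let S : Set unitInterval := c k '' Iio N
      have hSf : S.Finite := (Set.finite_Iio N).image _
      haveI : Finite S := hSf
      have hinv : ∀ i < N, Function.invFunOn (c k) (Iio N) (c k i) = i := fun i hi =>
        (hcinj k).leftInvOn_invFunOn hi
      let g0 : C(S, ℝ) := ⟨fun s => f (z (Function.invFunOn (c k) (Iio N) s)) / m,
        continuous_of_discreteTopology⟩
      obtain ⟨g, hg1, hg2⟩ := g0.exists_restrict_eq_forall_mem_of_closed
        (t := Icc (-(‖f‖/m)) (‖f‖/m)) (fun s => by
          rw [mem_Icc, ← abs_le]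
          change |f _ / m| ≤ _
          rw [abs_div, abs_of_pos hm0]
          gcongr
          exact f.norm_coe_le_norm _) ⟨0, by rw [mem_Icc]; constructor <;> [skip; skip] <;>
            first | (rw [neg_nonpos]; positivity) | positivity⟩ hSf.isClosed
      refine ⟨g, (ContinuousMap.norm_le _ (by positivity)).2 fun y => abs_le.2 (hg1 y), ?_⟩
      intro i hi
      have := congrArg (fun q : C(S, ℝ) => q ⟨c k i, i, hi, rfl⟩) hg2
      simp only [ContinuousMap.restrict_apply] at this
      rw [this]
      change f (z (Function.invFunOn (c k) (Iio N) (c k i))) / m = _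
      rw [hinv i hi]
    choose g hgn hgv using hg
    refine ⟨g, hgn, ?_⟩
    refine lt_of_le_of_lt ((ContinuousMap.norm_le _ (by positivity : 0 ≤ 3/8 * ‖f‖)).2 ?_) (by linarith)
    intro x
    have e1 : (f - ∑ k, (g k).comp (φ' k)) x = ∑ k : Fin m, (f x / m - g k (φ' k x)) := by
      rw [Finset.sum_sub_distrib]
      simp [ContinuousMap.sum_apply]
      field_simp
    rw [e1, Real.norm_eq_abs]
    let bad : Finset (Fin m) := Finset.univ.filter (fun k => ∀ i < N, w k i x ≠ 1)
    have hbad : bad.card ≤ n + 1 := by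
      refine le_trans ?_ ((wt_bad m N (fun j => p j x) (hp1 x)).trans (hpn x))
      rw [← Finset.card_map Fin.valEmbedding]
      refine Finset.card_le_card ?_
      intro k hk
      simp only [Finset.mem_map, bad, Finset.mem_filter, Finset.mem_univ, true_and] at hk
      obtain ⟨a, ha, rfl⟩ := hk
      simp only [Finset.mem_filter, Finset.mem_range]
      exact ⟨a.2, ha⟩
    calc |∑ k : Fin m, (f x / m - g k (φ' k x))|
        ≤ ∑ k : Fin m, |f x / m - g k (φ' k x)| := Finset.abs_sum_le_sum_abs _ _
      _ ≤ ∑ k : Fin m, (‖f‖/8/m + if k ∈ bad then 2*‖f‖/m else 0) := by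
          refine Finset.sum_le_sum fun k _ => ?_
          split_ifs with hk
          · have h1 : |f x / m| ≤ ‖f‖/m := by
              rw [abs_div, abs_of_pos hm0]; gcongr; exact f.norm_coe_le_norm _
            have h2 : |g k (φ' k x)| ≤ ‖f‖/m := ((g k).norm_coe_le_norm _).trans (hgn k)
            have h3 := abs_sub (f x / m) (g k (φ' k x))
            have h4 : 0 ≤ ‖f‖/8/m := by positivity
            have h5 : 2*‖f‖/m = ‖f‖/m + ‖f‖/m := by ring
            linarith
          · simp only [bad, Finset.mem_filter, Finset.mem_univ, true_and, not_forall, not_not] at hk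
            obtain ⟨i, hi, hwi⟩ := hk
            rw [hφ'1 k x i hi hwi, hgv k i hi, ← sub_div, abs_div, abs_of_pos hm0, add_zero]
            gcongr
            exact (hz1 i x (hwp k i x (by rw [hwi]; norm_num))).le
      _ = ‖f‖/8 + bad.card * (2*‖f‖/m) := by
          rw [Finset.sum_add_distrib, Finset.sum_ite_mem]
          simp
          field_simp
      _ ≤ ‖f‖/8 + (n+1) * (2*‖f‖/m) := by
          gcongr
          exact_mod_cast hbad
      _ = 3/8 * ‖f‖ := by
          rw [hm]; push_cast; field_simp; ring

lemma approx_surj {E F : Type*} [NormedAddCommGroup E] [NormedSpace ℝ E] [CompleteSpace E]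
    [NormedAddCommGroup F] [NormedSpace ℝ F] (T : E →L[ℝ] F) (C : ℝ) (hC : 0 ≤ C)
    (h : ∀ y : F, ∃ x : E, ‖x‖ ≤ C * ‖y‖ ∧ ‖y - T x‖ ≤ 3/4 * ‖y‖) (y : F) :
    ∃ x : E, T x = y ∧ ‖x‖ ≤ 4 * C * ‖y‖ := by
  choose s hs1 hs2 using h
  let r : ℕ → F := fun n => Nat.rec y (fun _ z => z - T (s z)) n
  have r0 : r 0 = y := rfl
  have rs : ∀ n, r (n+1) = r n - T (s (r n)) := fun n => rfl
  have hr : ∀ n, ‖r n‖ ≤ (3/4)^n * ‖y‖ := by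
    intro n
    induction n with
    | zero => simp [r0]
    | succ n ih => rw [rs, pow_succ]; nlinarith [hs2 (r n)]
  have hbd : ∀ n, ‖s (r n)‖ ≤ (C * ‖y‖) * (3/4)^n := fun n => by
    nlinarith [hs1 (r n), hr n, mul_le_mul_of_nonneg_left (hr n) hC]
  have hgeo : HasSum (fun n : ℕ => (C * ‖y‖) * (3/4 : ℝ)^n) ((C * ‖y‖) * (1 - 3/4)⁻¹) :=
    (hasSum_geometric_of_lt_one (by norm_num) (by norm_num)).mul_left _
  have hsum : Summable (fun n => s (r n)) := Summable.of_norm_bounded hgeo.summable hbd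
  refine ⟨∑' n, s (r n), ?_, ?_⟩
  · have h1 : Tendsto (fun n => T (∑ i ∈ Finset.range n, s (r i))) atTop (𝓝 (T (∑' n, s (r n)))) :=
      (T.continuous.tendsto _).comp hsum.hasSum.tendsto_sum_nat
    have h2 : ∀ n, T (∑ i ∈ Finset.range n, s (r i)) = y - r n := by
      intro n
      induction n with
      | zero => simp [r0]
      | succ n ih => rw [Finset.sum_range_succ, map_add, ih, rs]; abel
    have h3 : Tendsto r atTop (𝓝 0) := by
      refine squeeze_zero_norm hr ?_
      have := (tendsto_pow_atTop_nhds_zero_of_lt_one (r := (3/4:ℝ)) (by norm_num) (by norm_num)).mul_const ‖y‖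
      simpa using this
    have h4 : Tendsto (fun n => y - r n) atTop (𝓝 (y - 0)) := tendsto_const_nhds.sub h3
    rw [sub_zero] at h4
    exact tendsto_nhds_unique (h1.congr h2) h4
  · have := tsum_of_norm_bounded hgeo hbd
    refine this.trans (le_of_eq ?_)
    norm_num; ring

/-- Kolmogorov superposition with dimension-free constant. -/
lemma kolmogorov {K : Type*} [TopologicalSpace K] [TopologicalSpace.MetrizableSpace K]
    [CompactSpace K] (h : FinDimSpace K) :
    ∃ (m : ℕ) (φ : Fin m → C(K, unitInterval)), ∀ f : C(K, ℝ), ∃ g : Fin m → C(unitInterval, ℝ),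
      (∀ k, ‖g k‖ ≤ 8 * ‖f‖) ∧ ∀ x, f x = (m : ℝ)⁻¹ * ∑ k, g k (φ k x) := by
  letI := TopologicalSpace.metrizableSpaceMetric K
  obtain ⟨n, hn⟩ := h
  obtain ⟨m, hm⟩ : ∃ m, m = 8 * (n+1) := ⟨_, rfl⟩
  have hm0 : (0:ℝ) < m := by rw [hm]; positivity
  let D : ℕ → C(K, ℝ) := TopologicalSpace.denseSeq C(K, ℝ)
  let G : ℕ → Set (Fin m → C(K, unitInterval)) := fun r => {φ | 0 < ‖D r‖ →
    ∃ g : Fin m → C(unitInterval, ℝ),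
      (∀ k, ‖g k‖ ≤ ‖D r‖ / m) ∧ ‖D r - ∑ k, (g k).comp (φ k)‖ < ‖D r‖ / 2}
  have hGo : ∀ r, IsOpen (G r) := by
    intro r
    by_cases h0 : 0 < ‖D r‖
    · have : G r = ⋃ (g : Fin m → C(unitInterval, ℝ)) (_ : ∀ k, ‖g k‖ ≤ ‖D r‖ / m),
          {φ | ‖D r - ∑ k, (g k).comp (φ k)‖ < ‖D r‖ / 2} := by
        ext φ
        simp only [G, h0, forall_const, mem_iUnion, exists_prop, mem_ofPred_eq]
      rw [this]
      refine isOpen_iUnion fun g => isOpen_iUnion fun _ => ?_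
      refine isOpen_lt ?_ continuous_const
      refine (continuous_const.sub (continuous_finsetSum _ fun k _ => ?_)).norm
      exact ((g k).continuous_postcomp).comp (continuous_apply k)
    · have : G r = univ := by exact eq_univ_of_forall fun φ h => absurd h h0
      rw [this]; exact isOpen_univ
  have hGd : ∀ r, Dense (G r) := by
    intro r
    rw [Metric.dense_iff]
    intro φ η hη
    by_cases h0 : 0 < ‖D r‖
    · obtain ⟨φ', h1, h2⟩ := kol_dense hn m hm (D r) h0 φ η hη
      exact ⟨φ', h1, fun _ => h2⟩
    · exact ⟨φ, Metric.mem_ball_self hη, fun h => absurd h h0⟩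
  obtain ⟨φ, hφ⟩ := (dense_iInter_of_isOpen_nat hGo hGd).nonempty
  rw [mem_iInter] at hφ
  refine ⟨m, φ, ?_⟩
  let T : (Fin m → C(unitInterval, ℝ)) →L[ℝ] C(K, ℝ) :=
    { toFun := fun g => ∑ k, (g k).comp (φ k)
      map_add' := fun g g' => by
        rw [← Finset.sum_add_distrib]; rfl
      map_smul' := fun c g => by
        simp only [RingHom.id_apply]
        rw [Finset.smul_sum]; rfl
      cont := continuous_finsetSum _ fun k _ =>
        ((φ k).continuous_precomp).comp (continuous_apply k) }
  have hT : ∀ f : C(K, ℝ), ∃ g : Fin m → C(unitInterval, ℝ),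
      ‖g‖ ≤ (2 / m : ℝ) * ‖f‖ ∧ ‖f - T g‖ ≤ 3/4 * ‖f‖ := by
    intro f
    by_cases hf : f = 0
    · exact ⟨0, by simp [hf], by simp [hf]⟩
    have hf0 : 0 < ‖f‖ := norm_pos_iff.2 hf
    obtain ⟨_, hr, r, rfl⟩ := Metric.dense_iff.1 (TopologicalSpace.denseRange_denseSeq C(K, ℝ)) f (‖f‖/16)
      (by positivity)
    change D r ∈ _ at hr
    rw [Metric.mem_ball, dist_eq_norm] at hr
    have h1 : ‖D r‖ ≤ 17/16 * ‖f‖ := by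
      have := norm_add_le (D r - f) f
      rw [sub_add_cancel] at this
      linarith
    have h2 : 0 < ‖D r‖ := by
      have := norm_sub_norm_le f (D r)
      rw [norm_sub_rev] at this
      linarith
    obtain ⟨g, hg1, hg2⟩ := hφ r h2
    refine ⟨g, ?_, ?_⟩
    · refine (pi_norm_le_iff_of_nonneg (by positivity)).2 fun k => (hg1 k).trans ?_
      rw [div_mul_eq_mul_div]
      gcongr
      linarith
    · have e : f - T g = (f - D r) + (D r - ∑ k, (g k).comp (φ k)) := by
        change f - (∑ k, (g k).comp (φ k)) = _
        abel
      rw [e]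
      have := norm_add_le (f - D r) (D r - ∑ k, (g k).comp (φ k))
      rw [norm_sub_rev f] at this
      linarith
  intro f
  obtain ⟨g, hg, hgn⟩ := approx_surj T (2/m) (by positivity) hT f
  refine ⟨fun k => (m : ℝ) • g k, fun k => ?_, fun x => ?_⟩
  · have h1 := (norm_le_pi_norm g k).trans hgn
    rw [norm_smul, Real.norm_of_nonneg hm0.le]
    calc (m : ℝ) * ‖g k‖ ≤ m * (4 * (2 / m) * ‖f‖) := by gcongr
      _ = 8 * ‖f‖ := by field_simp; ring
  · rw [← hg]
    change (∑ k, (g k).comp (φ k)) x = _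
    rw [ContinuousMap.sum_apply, Finset.mul_sum]
    refine Finset.sum_congr rfl fun k _ => ?_
    simp
    field_simp

end FdAux

namespace FdAux

open Topology Filter

lemma cov_closed {X C : Type*} [TopologicalSpace X] [TopologicalSpace C] (j : C → X)
    (hj : IsClosedEmbedding j) {n : ℕ} (h : CovDimLE X n) : CovDimLE C n := by
  intro ι U hι hU hc
  by_cases hne : Nonempty ι
  · have := fun i => hj.isInducing.isOpen_iff.1 (hU i)
    choose O hO hOU using this
    obtain ⟨V, h1, h2, h3, h4⟩ := h ι (fun i => O i ∪ (range j)ᶜ) hι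
      (fun i => (hO i).union hj.isClosed_range.isOpen_compl) (by
        rw [eq_univ_iff_forall]
        intro x
        rw [mem_iUnion]
        by_cases hx : x ∈ range j
        · obtain ⟨c, rfl⟩ := hx
          obtain ⟨i, hi⟩ := mem_iUnion.1 (hc.ge (mem_univ c))
          rw [← hOU i] at hi
          exact ⟨i, Or.inl hi⟩
        · exact ⟨hne.some, Or.inr hx⟩)
    refine ⟨fun i => j ⁻¹' V i, fun i => (h1 i).preimage hj.continuous, fun i c hc => ?_, ?_, ?_⟩
    · rcases h2 i hc with h | h
      · rw [← hOU i]; exact h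
      · exact absurd ⟨c, rfl⟩ h
    · rw [← preimage_iUnion, h3, preimage_univ]
    · intro x
      exact h4 (j x)
  · rw [not_nonempty_iff] at hne
    refine ⟨U, hU, fun i => subset_rfl, hc, fun x => ?_⟩
    rw [Set.eq_empty_of_isEmpty {i | x ∈ U i}]
    simp

lemma pt_cont {X Y : Type*} [TopologicalSpace X] [TopologicalSpace Y]
    (L : C(X, ℝ) → C(Y, ℝ)) (h : ∀ y, @Continuous _ _ (ptTop X) _ (fun g => L g y)) :
    @Continuous _ _ (ptTop X) (ptTop Y) L :=
  (@continuous_induced_rng C(Y, ℝ) (Y → ℝ) C(X, ℝ) (fun f => (f : Y → ℝ)) L _ (ptTop X)).2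
    (@continuous_pi _ _ _ (ptTop X) _ _ h)

lemma cs_help {Z : Type*} [TopologicalSpace Z] {ι : Type*} (s : Finset ι) (f : ι → Z → ℝ)
    (h : ∀ i ∈ s, Continuous (f i)) : Continuous (fun z => ∑ i ∈ s, f i z) :=
  continuous_finsetSum s h

lemma cm_help {Z : Type*} [TopologicalSpace Z] (c : ℝ) (f : Z → ℝ)
    (h : Continuous f) : Continuous (fun z => c * f z) :=
  continuous_const.mul h

lemma ca_help {Z : Type*} [TopologicalSpace Z] (f g : Z → ℝ)
    (h : Continuous f) (h' : Continuous g) : Continuous (fun z => f z + g z) :=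
  h.add h'

lemma csub_help {Z : Type*} [TopologicalSpace Z] (f g : Z → ℝ)
    (h : Continuous f) (h' : Continuous g) : Continuous (fun z => f z - g z) :=
  h.sub h'

lemma ev_cont {X : Type*} [TopologicalSpace X] (x : X) :
    @Continuous _ _ (ptTop X) _ (fun g : C(X, ℝ) => g x) :=
  @Continuous.comp _ _ _ (ptTop X) _ _ _ _ (continuous_apply x) continuous_induced_dom

lemma LD_trans {X Y Z : Type*} [TopologicalSpace X] [TopologicalSpace Y] [TopologicalSpace Z]
    (h1 : LDominates X Y) (h2 : LDominates Y Z) : LDominates X Z := by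
  obtain ⟨L, hL, hs⟩ := h1
  obtain ⟨M, hM, ht⟩ := h2
  refine ⟨M.comp L, ?_, ht.comp hs⟩
  exact @Continuous.comp _ _ _ (ptTop X) (ptTop Y) (ptTop Z) _ _ hM hL

def precompL {X Y : Type*} [TopologicalSpace X] [TopologicalSpace Y] (e : C(X, Y)) :
    C(Y, ℝ) →ₗ[ℝ] C(X, ℝ) where
  toFun g := g.comp e
  map_add' _ _ := rfl
  map_smul' _ _ := rfl

lemma precompL_cont {X Y : Type*} [TopologicalSpace X] [TopologicalSpace Y] (e : C(X, Y)) :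
    @Continuous _ _ (ptTop Y) (ptTop X) (precompL e) :=
  pt_cont _ fun x => ev_cont (e x)

lemma LD_embed {X Y : Type*} [TopologicalSpace X] [TopologicalSpace Y] [NormalSpace Y]
    (e : X → Y) (he : IsClosedEmbedding e) : LDominates Y X := by
  refine ⟨precompL ⟨e, he.continuous⟩, precompL_cont _, fun f => ?_⟩
  exact f.exists_extension he

section Q

variable {J : Type*} [TopologicalSpace J] [DiscreteTopology J]

lemma cc_eq : coclosedCompact (J × unitInterval) = comap Prod.fst cofinite := by
  rw [coclosedCompact_eq_cocompact, ← coprod_cocompact, cocompact_eq_bot (X := unitInterval),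
    cocompact_eq_cofinite]
  simp [Filter.coprod]

lemma Q_fin (g : C(OnePoint (J × unitInterval), ℝ)) (ε : ℝ) (hε : 0 < ε) :
    {p : J | ∃ t : unitInterval, ε ≤ |g ((p, t) : J × unitInterval) - g OnePoint.infty|}.Finite := by
  have h := ((OnePoint.continuous_iff _).1 g.continuous).1
  rw [cc_eq] at h
  have h2 := h (Metric.ball_mem_nhds _ hε)
  rw [mem_map, mem_comap] at h2
  obtain ⟨s, hs, hsub⟩ := h2
  rw [mem_cofinite] at hs
  refine hs.subset fun p hp hps => ?_
  obtain ⟨t, ht⟩ := hp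
  have := hsub (show (p, t) ∈ Prod.fst ⁻¹' s from hps)
  rw [mem_preimage, Metric.mem_ball, Real.dist_eq] at this
  linarith

lemma Q_ext (γ : J → C(unitInterval, ℝ)) (h : ∀ ε > 0, {p | ε ≤ ‖γ p‖}.Finite) :
    ∃ g : C(OnePoint (J × unitInterval), ℝ), g OnePoint.infty = 0 ∧
      ∀ p t, g ((p, t) : J × unitInterval) = γ p t := by
  let f : C(J × unitInterval, ℝ) := ⟨fun q => γ q.1 q.2, by
    rw [continuous_prod_of_discrete_left]
    exact fun p => (γ p).continuous⟩
  refine ⟨OnePoint.continuousMapMk f 0 ?_, rfl, fun p t => rfl⟩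
  rw [cc_eq, Metric.tendsto_nhds]
  intro ε hε
  rw [Filter.eventually_comap]
  have := (h ε hε).compl_mem_cofinite
  filter_upwards [this] with p hp q hq
  subst hq
  simp only [mem_compl_iff, mem_ofPred_eq, not_le] at hp
  rw [dist_zero_right]
  exact ((γ q.1).norm_coe_le_norm q.2).trans_lt hp

lemma Q_dom [Countable J] : LDominates unitInterval (OnePoint (J × unitInterval)) := by
  obtain ⟨c, hc⟩ := exists_injective_nat J
  have hmem : ∀ q : J × unitInterval, (2 * (c q.1 : ℝ) + 1 + q.2)⁻¹ ∈ unitInterval := by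
    intro q
    have h1 := q.2.2.1
    have h0 : (0:ℝ) ≤ c q.1 := Nat.cast_nonneg _
    constructor
    · positivity
    · exact inv_le_one_of_one_le₀ (by linarith)
  let f : C(J × unitInterval, unitInterval) := ⟨fun q => ⟨(2 * (c q.1 : ℝ) + 1 + q.2)⁻¹, hmem q⟩, by
    rw [continuous_prod_of_discrete_left]
    intro p
    refine Continuous.subtype_mk (Continuous.inv₀ (by fun_prop) fun t => ?_) _
    have h1 := t.2.1
    have h0 : (0:ℝ) ≤ c p := Nat.cast_nonneg _
    have : (0:ℝ) < 2 * c p + 1 + t := by linarith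
    exact this.ne'⟩
  have hf : ∀ q, (f q : ℝ) = (2 * (c q.1 : ℝ) + 1 + q.2)⁻¹ := fun q => rfl
  have hfpos : ∀ q, (0:ℝ) < f q := fun q => by
    rw [hf]
    have h1 := q.2.2.1
    have h0 : (0:ℝ) ≤ c q.1 := Nat.cast_nonneg _
    have : (0:ℝ) < 2 * c q.1 + 1 + q.2 := by linarith
    positivity
  have hlim : Tendsto f (coclosedCompact (J × unitInterval)) (𝓝 0) := by
    rw [cc_eq, tendsto_subtype_rng]
    have h1 : Tendsto (fun q : J × unitInterval => (c q.1 : ℝ)) (comap Prod.fst cofinite) atTop :=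
      tendsto_natCast_atTop_atTop.comp ((Nat.cofinite_eq_atTop ▸ hc.tendsto_cofinite).comp
        tendsto_comap)
    have h2 : Tendsto (fun q : J × unitInterval => 2 * (c q.1 : ℝ) + 1 + q.2)
        (comap Prod.fst cofinite) atTop := by
      refine tendsto_atTop_mono (fun q => ?_) h1
      have h1 := q.2.2.1
      have h0 : (0:ℝ) ≤ c q.1 := Nat.cast_nonneg _
      linarith
    exact h2.inv_tendsto_atTop
  let e := OnePoint.continuousMapMk f 0 hlim
  have einf : e OnePoint.infty = 0 := rfl
  have ecoe : ∀ q : J × unitInterval, e (q : OnePoint (J × unitInterval)) = f q := fun q => rfl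
  refine LD_embed e (e.continuous.isClosedEmbedding ?_)
  intro x y hxy
  induction x using OnePoint.rec with
  | infty =>
    induction y using OnePoint.rec with
    | infty => rfl
    | coe y =>
      rw [einf, ecoe] at hxy
      have := hfpos y
      rw [← hxy] at this
      simp at this
  | coe x =>
    induction y using OnePoint.rec with
    | infty =>
      rw [einf, ecoe] at hxy
      have := hfpos x
      rw [hxy] at this
      simp at this
    | coe y =>
      rw [ecoe, ecoe] at hxy
      have h := congrArg (Subtype.val) hxy
      rw [hf, hf, inv_inj] at h
      have hx := x.2.2
      have hy := y.2.2
      have hcc : c x.1 = c y.1 := by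
        have a : (c x.1 : ℝ) < c y.1 + 1 := by linarith [hx.1, hx.2, hy.1, hy.2]
        have b : (c y.1 : ℝ) < c x.1 + 1 := by linarith [hx.1, hx.2, hy.1, hy.2]
        have a' : c x.1 < c y.1 + 1 := by exact_mod_cast a
        have b' : c y.1 < c x.1 + 1 := by exact_mod_cast b
        omega
      have h2 : x.2 = y.2 := Subtype.ext (by rw [hcc] at h; linarith)
      rw [Prod.ext (hc hcc) h2]

end Q

lemma glue_cont {K : Type*} [MetricSpace K] {A : Set K} (hA : IsClosed A)
    (ρ : PartitionOfUnity ℕ (Aᶜ : Set K) univ) (f : C(A, ℝ)) (G : ℕ → K → ℝ)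
    (hG : ∀ j, Continuous (G j))
    (hε : ∀ a : A, ∀ ε > 0, ∀ᶠ y in 𝓝 (a : K), ∀ h : y ∈ Aᶜ, ∀ j, ρ j ⟨y, h⟩ ≠ 0 →
      |G j y - f a| < ε) (v : K → ℝ) (hv1 : ∀ a : A, v a = f a)
    (hv2 : ∀ w : (Aᶜ : Set K), v w = ∑ j ∈ ρ.finsupport w, ρ j w * G j w) : Continuous v := by
  rw [continuous_iff_continuousAt]
  intro y
  by_cases hy : y ∈ A
  · rw [Metric.continuousAt_iff']
    intro ε hε0
    have h1 := hε ⟨y, hy⟩ ε hε0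
    have h2 : ∀ᶠ y' in 𝓝 y, ∀ h : y' ∈ A, |f ⟨y', h⟩ - f ⟨y, hy⟩| < ε := by
      obtain ⟨δ, hδ, hd⟩ := Metric.continuousAt_iff.1 (f.continuous.continuousAt (x := ⟨y, hy⟩)) ε hε0
      filter_upwards [Metric.ball_mem_nhds y hδ] with y' hy' h
      exact hd (x := ⟨y', h⟩) hy'
    filter_upwards [h1, h2] with y' h1 h2
    rw [hv1 ⟨y, hy⟩]
    by_cases h : y' ∈ A
    · rw [hv1 ⟨y', h⟩]
      exact h2 h
    · rw [hv2 ⟨y', h⟩]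
      have := (convex_ball (f ⟨y, hy⟩) ε).sum_mem (t := ρ.finsupport ⟨y', h⟩)
        (w := fun j => ρ j ⟨y', h⟩) (z := fun j => G j y') (fun j _ => ρ.nonneg _ _)
        (ρ.sum_finsupport (mem_univ _)) (fun j hj => by
          rw [Metric.mem_ball, Real.dist_eq]
          exact h1 h j ((ρ.mem_finsupport _).1 hj))
      simp only [smul_eq_mul] at this
      exact this
  · have ho := hA.isOpen_compl.isOpenEmbedding_subtypeVal
    refine (ho.continuousAt_iff (x := (⟨y, hy⟩ : (Aᶜ : Set K)))).1 ?_
    refine Continuous.continuousAt ?_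
    have : v ∘ Subtype.val = fun w : (Aᶜ : Set K) => ∑ᶠ j, ρ j w • G j w := by
      funext w
      rw [Function.comp, hv2 w]
      exact ρ.sum_finsupport_smul_eq_finsum (fun j w => G j w)
    rw [this]
    exact ρ.continuous_finsum_smul fun j w _ => ((hG j).comp continuous_subtype_val).continuousAt

end FdAux

namespace FdAux

open Topology Filter

lemma kol_rel {K : Type*} [MetricSpace K] [CompactSpace K] (D : Set K) (hD : IsClosed D)
    (h : FinDimSpace D) :
    ∃ (m : ℕ) (φ : Fin m → C(K, unitInterval)), ∀ (f : C(K, ℝ)) (M : ℝ), 0 ≤ M →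
      (∀ x ∈ D, |f x| ≤ M) → ∃ g : Fin m → C(unitInterval, ℝ),
      (∀ k, ‖g k‖ ≤ 8 * M) ∧ ∀ x ∈ D, f x = (m : ℝ)⁻¹ * ∑ k, g k (φ k x) := by
  have : CompactSpace D := isCompact_iff_compactSpace.1 hD.isCompact
  obtain ⟨m, φ, hφ⟩ := kolmogorov h
  have hex := fun k => (φ k).exists_restrict_eq hD
  choose Φ hΦ using hex
  refine ⟨m, Φ, fun f M hM hfM => ?_⟩
  obtain ⟨g, hg1, hg2⟩ := hφ (f.restrict D)
  have hn : ‖f.restrict D‖ ≤ M := (ContinuousMap.norm_le _ hM).2 fun x => hfM x x.2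
  refine ⟨g, fun k => (hg1 k).trans (by linarith), fun x hx => ?_⟩
  have := hg2 ⟨x, hx⟩
  simp only [ContinuousMap.restrict_apply] at this
  rw [this]
  congr 1
  refine Finset.sum_congr rfl fun k _ => ?_
  rw [← hΦ k]
  rfl

lemma glue {K : Type*} [MetricSpace K] [CompactSpace K] (A : Set K) (hA : IsClosed A)
    (hne : A.Nonempty) (hfin : ∀ x, x ∉ A → ∃ U : Set K, IsOpen U ∧ x ∈ U ∧ FinDimSpace U)
    (hL : LDominates unitInterval A) : LDominates unitInterval K := by
  by_cases hW : ∀ x, x ∈ A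
  · refine LD_trans hL (LD_embed (fun x => ⟨x, hW x⟩) ?_)
    refine Continuous.isClosedEmbedding (by fun_prop) ?_
    intro x y hxy
    simpa using hxy
  push Not at hW
  obtain ⟨w0, hw0⟩ := hW
  let W : Set K := Aᶜ
  have hpos : ∀ x : W, 0 < Metric.infDist (x : K) A := fun x =>
    (hA.notMem_iff_infDist_pos hne).1 x.2
  -- radii
  have hr : ∀ x : W, ∃ r : ℝ, 0 < r ∧ r ≤ Metric.infDist (x : K) A / 4 ∧
      FinDimSpace (Metric.closedBall (x : K) r) := by
    intro x
    obtain ⟨U, hU, hxU, n, hn⟩ := hfin x x.2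
    obtain ⟨r, hr, hrU⟩ := Metric.nhds_basis_closedBall.mem_iff.1 (hU.mem_nhds hxU)
    have hsub : Metric.closedBall (x : K) (min r (Metric.infDist (x : K) A / 4)) ⊆ U :=
      (Metric.closedBall_subset_closedBall (min_le_left _ _)).trans hrU
    refine ⟨min r (Metric.infDist (x : K) A / 4), lt_min hr (by linarith [hpos x]), min_le_right _ _,
      n, cov_closed (Set.inclusion hsub) ?_ hn⟩
    have : CompactSpace (Metric.closedBall (x : K) (min r (Metric.infDist (x : K) A / 4))) :=
      isCompact_iff_compactSpace.1 Metric.isClosed_closedBall.isCompact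
    exact (continuous_inclusion hsub).isClosedEmbedding (Set.inclusion_injective hsub)
  choose r hr0 hr4 hrd using hr
  have ha : ∀ x : W, ∃ a : A, Metric.infDist (x : K) A = dist (x : K) a := by
    intro x
    obtain ⟨y, hy, h⟩ := hA.isCompact.exists_infDist_eq_dist hne (x : K)
    exact ⟨⟨y, hy⟩, h⟩
  choose α hα using ha
  obtain ⟨s, hsc, hsU⟩ := TopologicalSpace.countable_cover_nhds
    (f := fun x : W => Metric.ball x (r x)) (fun x => Metric.ball_mem_nhds x (hr0 x))
  have hsne : s.Nonempty := by
    obtain ⟨x, hx, _⟩ := mem_iUnion₂.1 (hsU.ge (mem_univ (⟨w0, hw0⟩ : W)))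
    exact ⟨x, hx⟩
  obtain ⟨q, hq⟩ := hsc.exists_eq_range hsne
  obtain ⟨ρ, hρ⟩ := PartitionOfUnity.exists_isSubordinate (isClosed_univ (X := W))
    (fun j => Metric.ball (q j) (r (q j))) (fun j => Metric.isOpen_ball) (by
      intro x _
      obtain ⟨y, hy, hxy⟩ := mem_iUnion₂.1 (hsU.ge (mem_univ x))
      rw [hq] at hy
      obtain ⟨j, rfl⟩ := hy
      exact mem_iUnion.2 ⟨j, hxy⟩)
  let D : ℕ → Set K := fun j => Metric.closedBall (q j : K) (r (q j))
  let a : ℕ → A := fun j => α (q j)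
  have hρD' : ∀ j (w : W), ρ j w ≠ 0 → dist (w : K) (q j) < r (q j) := fun j w hw =>
    hρ j (subset_tsupport _ hw)
  have hρD : ∀ j (w : W), ρ j w ≠ 0 → (w : K) ∈ D j := fun j w hw => (hρD' j w hw).le
  have hDA : ∀ j, ∀ y ∈ D j, 3/4 * Metric.infDist (q j : K) A ≤ Metric.infDist y A := by
    intro j y hy
    have h1 := Metric.infDist_le_infDist_add_dist (s := A) (x := (q j : K)) (y := y)
    have h2 : dist y (q j : K) ≤ r (q j) := hy
    rw [dist_comm] at h1
    linarith [hr4 (q j)]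
  have hDa : ∀ j, ∀ y ∈ D j, dist y (a j) ≤ 5/4 * Metric.infDist (q j : K) A := by
    intro j y hy
    have h2 : dist y (q j : K) ≤ r (q j) := hy
    have h3 := dist_triangle y (q j : K) (a j)
    have h4 := hα (q j)
    change dist y (α (q j)) ≤ _
    change dist y (α (q j)) ≤ _ + dist _ ((α (q j) : A) : K) at h3
    linarith [hr4 (q j)]
  have hfinite : ∀ δ > 0, {j | (∃ w, ρ j w ≠ 0) ∧ δ ≤ Metric.infDist (q j : K) A}.Finite := by
    intro δ hδ
    have hcpt : IsCompact {w : W | 3/4 * δ ≤ Metric.infDist (w : K) A} := by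
      rw [Subtype.isCompact_iff]
      refine IsClosed.isCompact ?_
      have : (Subtype.val '' {w : W | 3/4 * δ ≤ Metric.infDist (w : K) A} : Set K) =
          {y | 3/4 * δ ≤ Metric.infDist y A} := by
        ext y
        constructor
        · rintro ⟨w, hw, rfl⟩; exact hw
        · intro hy
          refine ⟨⟨y, fun hyA => ?_⟩, hy, rfl⟩
          have hy' : 3/4 * δ ≤ Metric.infDist y A := hy
          rw [Metric.infDist_zero_of_mem hyA] at hy'
          linarith
      rw [this]
      exact isClosed_le continuous_const (Metric.continuous_infDist_pt A)
    refine (ρ.locallyFinite.finite_nonempty_inter_compact hcpt).subset ?_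
    rintro j ⟨⟨w, hw⟩, hj⟩
    refine ⟨w, hw, ?_⟩
    have := hDA j w (hρD j w hw)
    change 3/4 * δ ≤ _
    linarith
  have hkol := fun j => kol_rel (D j) Metric.isClosed_closedBall (hrd (q j))
  choose m φ hφ using hkol
  let J := Unit ⊕ (Σ j, Fin (m j))
  obtain ⟨LA, hLAc, hLAs⟩ := hL
  let P0 : C(OnePoint (J × unitInterval), ℝ) →ₗ[ℝ] C(unitInterval, ℝ) :=
    precompL ⟨fun t => (((Sum.inl (), t) : J × unitInterval) : OnePoint (J × unitInterval)),
      OnePoint.continuous_coe.comp (by fun_prop)⟩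
  let fA : C(OnePoint (J × unitInterval), ℝ) →ₗ[ℝ] C(A, ℝ) := LA.comp P0
  have hfAc : ∀ b : A, @Continuous _ _ (ptTop _) _ (fun g => fA g b) := by
    intro b
    have h1 : @Continuous _ _ (ptTop _) (ptTop _) fA :=
      @Continuous.comp _ _ _ (ptTop _) (ptTop _) (ptTop _) P0 LA hLAc (precompL_cont _)
    exact @Continuous.comp _ _ _ (ptTop _) (ptTop _) _ _ _ (ev_cont b) h1
  let pt : (j : ℕ) → Fin (m j) → K → OnePoint (J × unitInterval) := fun j i y =>
    ((Sum.inr ⟨j, i⟩, φ j i y) : J × unitInterval)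
  have hptc : ∀ j i, Continuous (pt j i) := fun j i =>
    OnePoint.continuous_coe.comp (continuous_const.prodMk (φ j i).continuous)
  let G : C(OnePoint (J × unitInterval), ℝ) → ℕ → K → ℝ := fun g j y =>
    fA g (a j) + (m j : ℝ)⁻¹ * ∑ i, (g (pt j i y) - g OnePoint.infty)
  have hGadd : ∀ g g' j y, G (g + g') j y = G g j y + G g' j y := by
    intro g g' j y
    simp only [G, map_add, ContinuousMap.add_apply, Finset.sum_sub_distrib, Finset.sum_add_distrib]
    ring
  have hGsmul : ∀ (c : ℝ) g j y, G (c • g) j y = c * G g j y := by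
    intro c g j y
    simp only [G, map_smul, ContinuousMap.smul_apply, smul_eq_mul, ← mul_sub, ← Finset.mul_sum]
    ring
  classical
  let val : C(OnePoint (J × unitInterval), ℝ) → K → ℝ := fun g y =>
    if h : y ∈ A then fA g ⟨y, h⟩ else ∑ j ∈ ρ.finsupport ⟨y, h⟩, ρ j ⟨y, h⟩ * G g j y
  have hval1 : ∀ g (b : A), val g b = fA g b := fun g b => dif_pos b.2
  have hval2 : ∀ g (w : W), val g w = ∑ j ∈ ρ.finsupport w, ρ j w * G g j w :=
    fun g w => dif_neg w.2
  have hvalc : ∀ g, Continuous (val g) := by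
    intro g
    refine glue_cont hA ρ (fA g) (G g) (fun j => ?_) ?_ (val g) (hval1 g) (hval2 g)
    · refine continuous_const.add (continuous_const.mul (continuous_finsetSum _ fun i _ => ?_))
      exact (g.continuous.comp (hptc j i)).sub continuous_const
    · intro b ε hε
      obtain ⟨δ, hδ, hd⟩ := Metric.continuousAt_iff.1 ((fA g).continuous.continuousAt (x := b))
        (ε/2) (by positivity)
      have hbad : {j | ∃ i t, ε/2 ≤ |g ((Sum.inr ⟨j, i⟩, t) : J × unitInterval) - g OnePoint.infty|}.Finite := by
        refine ((Q_fin g (ε/2) (by positivity)).image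
          (fun p : J => Sum.elim (fun _ => 0) (fun s => s.1) p)).subset ?_
        rintro j ⟨i, t, ht⟩
        exact ⟨Sum.inr ⟨j, i⟩, ⟨t, ht⟩, rfl⟩
      have hev : ∀ᶠ y in 𝓝 (b : K), ∀ j ∈ {j | ∃ i t, ε/2 ≤
          |g ((Sum.inr ⟨j, i⟩, t) : J × unitInterval) - g OnePoint.infty|}, y ∉ D j := by
        rw [Filter.eventually_all_finite hbad]
        intro j _
        refine (Metric.isClosed_closedBall (x := (q j : K)) (ε := r (q j))).isOpen_compl.mem_nhds ?_
        intro hb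
        have := hDA j b hb
        rw [Metric.infDist_zero_of_mem b.2] at this
        linarith [hpos (q j)]
      filter_upwards [hev, Metric.ball_mem_nhds (b : K) (show 0 < δ/3 by positivity)] with y h1 h2 hy j hj
      have hyD : y ∈ D j := hρD j ⟨y, hy⟩ hj
      have hjb : ∀ i t, |g ((Sum.inr ⟨j, i⟩, t) : J × unitInterval) - g OnePoint.infty| < ε/2 := by
        intro i t
        by_contra hcon
        push Not at hcon
        exact h1 j ⟨i, t, hcon⟩ hyD
      have hda : dist (a j) b < δ := by
        rw [Subtype.dist_eq]
        have e1 := hDa j y hyD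
        have e2 := hDA j y hyD
        have e3 := Metric.infDist_le_dist_of_mem (x := y) b.2
        rw [Metric.mem_ball] at h2
        have e4 := dist_triangle_left ((a j : A) : K) (b : K) y
        linarith
      have e1 : |fA g (a j) - fA g b| < ε/2 := hd hda
      have e2 : |(m j : ℝ)⁻¹ * ∑ i, (g (pt j i y) - g OnePoint.infty)| ≤ ε/2 := by
        rw [abs_mul, abs_of_nonneg (by positivity)]
        have : |∑ i, (g (pt j i y) - g OnePoint.infty)| ≤ m j * (ε/2) := by
          refine (Finset.abs_sum_le_sum_abs _ _).trans ?_
          refine (Finset.sum_le_sum fun i _ => (hjb i _).le).trans ?_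
          simp
        calc (m j : ℝ)⁻¹ * |∑ i, (g (pt j i y) - g OnePoint.infty)| ≤ (m j : ℝ)⁻¹ * (m j * (ε/2)) := by
              gcongr
          _ = ((m j : ℝ)⁻¹ * m j) * (ε/2) := by ring
          _ ≤ 1 * (ε/2) := by gcongr; exact inv_mul_le_one
          _ = ε/2 := one_mul _
      have e3 : G g j y - fA g b = (fA g (a j) - fA g b) +
          (m j : ℝ)⁻¹ * ∑ i, (g (pt j i y) - g OnePoint.infty) := by
        simp only [G]; ring
      rw [e3]
      have := abs_add_le (fA g (a j) - fA g b) ((m j : ℝ)⁻¹ * ∑ i, (g (pt j i y) - g OnePoint.infty))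
      linarith
  refine LD_trans (Q_dom (J := J)) ⟨
    { toFun := fun g => ⟨val g, hvalc g⟩
      map_add' := ?_
      map_smul' := ?_ }, ?_, ?_⟩
  · intro g g'
    ext y
    change val (g + g') y = val g y + val g' y
    by_cases hy : y ∈ A
    · rw [hval1 _ ⟨y, hy⟩, hval1 _ ⟨y, hy⟩, hval1 _ ⟨y, hy⟩, map_add]; rfl
    · rw [hval2 _ ⟨y, hy⟩, hval2 _ ⟨y, hy⟩, hval2 _ ⟨y, hy⟩, ← Finset.sum_add_distrib]
      exact Finset.sum_congr rfl fun j _ => by rw [hGadd]; ring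
  · intro c g
    ext y
    change val (c • g) y = c * val g y
    by_cases hy : y ∈ A
    · rw [hval1 _ ⟨y, hy⟩, hval1 _ ⟨y, hy⟩, map_smul]; rfl
    · rw [hval2 _ ⟨y, hy⟩, hval2 _ ⟨y, hy⟩, Finset.mul_sum]
      exact Finset.sum_congr rfl fun j _ => by rw [hGsmul]; ring
  · refine pt_cont _ fun y => ?_
    change @Continuous _ _ (ptTop _) _ (fun g => val g y)
    by_cases hy : y ∈ A
    · have : (fun g => val g y) = fun g => fA g ⟨y, hy⟩ := funext fun g => hval1 g ⟨y, hy⟩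
      rw [this]
      exact hfAc _
    · have : (fun g => val g y) = fun g => ∑ j ∈ ρ.finsupport ⟨y, hy⟩, ρ j ⟨y, hy⟩ * G g j y :=
        funext fun g => hval2 g ⟨y, hy⟩
      rw [this]
      let tt := ptTop (OnePoint (J × unitInterval))
      refine @cs_help _ tt _ _ _ fun j _ => ?_
      refine @cm_help _ tt _ _ ?_
      refine @ca_help _ tt _ _ (hfAc _) ?_
      refine @cm_help _ tt _ _ ?_
      refine @cs_help _ tt _ _ _ fun i _ => ?_
      exact @csub_help _ tt _ _ (ev_cont _) (ev_cont _)
  · intro F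
    obtain ⟨g0, hg0⟩ := hLAs (F.restrict A)
    have hDne : ∀ j, (q j : K) ∈ D j := fun j => Metric.mem_closedBall_self (hr0 (q j)).le
    have hcD : ∀ j, CompactSpace (D j) := fun j =>
      isCompact_iff_compactSpace.1 Metric.isClosed_closedBall.isCompact
    let H : ℕ → C(K, ℝ) := fun j => F - ContinuousMap.const K (F (a j))
    let M : ℕ → ℝ := fun j => ‖(H j).restrict (D j)‖
    have hM : ∀ j, ∀ x ∈ D j, |H j x| ≤ M j := fun j x hx =>
      ((H j).restrict (D j)).norm_coe_le_norm ⟨x, hx⟩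
    have hMs : ∀ ε > 0, {j | (∃ w, ρ j w ≠ 0) ∧ ε < M j}.Finite := by
      intro ε hε
      obtain ⟨δ, hδ, hu⟩ := Metric.uniformContinuous_iff.1
        (CompactSpace.uniformContinuous_of_continuous F.continuous) ε hε
      refine (hfinite (δ/2) (by positivity)).subset ?_
      rintro j ⟨hj, hj'⟩
      refine ⟨hj, ?_⟩
      by_contra hcon
      push Not at hcon
      refine absurd hj' (not_lt.2 ((ContinuousMap.norm_le _ hε.le).2 fun x => ?_))
      have := hDa j x x.2
      exact (hu (a := (x : K)) (b := a j) (by linarith)).le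
    have hg := fun j => hφ j (H j) (M j) (norm_nonneg _) (hM j)
    choose gg hgn hgv using hg
    let γ : J → C(unitInterval, ℝ) := Sum.elim (fun _ => g0)
      (fun s => if ∃ w, ρ s.1 w ≠ 0 then gg s.1 s.2 else 0)
    obtain ⟨g, hginf, hgγ⟩ := Q_ext γ (by
      intro ε hε
      have hT := hMs (ε/9) (by positivity)
      refine ((Set.finite_singleton (Sum.inl () : J)).union
        ((hT.toFinset.sigma (fun j => (Finset.univ : Finset (Fin (m j))))).finite_toSet.image
          (Sum.inr : _ → J))).subset ?_
      rintro (⟨⟩ | ⟨j, i⟩) hp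
      · left; rfl
      · right
        refine ⟨⟨j, i⟩, ?_, rfl⟩
        have hp' : ε ≤ ‖if ∃ w, ρ j w ≠ 0 then gg j i else 0‖ := hp
        split_ifs at hp' with hw
        · simp only [Finset.coe_sigma, Finite.coe_toFinset, Finset.coe_univ]
          refine ⟨⟨hw, ?_⟩, mem_univ _⟩
          change ε/9 < M j
          linarith [hgn j i]
        · simp at hp'
          linarith)
    refine ⟨g, ?_⟩
    have hP0 : P0 g = g0 := by
      ext t
      exact hgγ (Sum.inl ()) t
    have hfA : ∀ b : A, fA g b = F b := by
      intro b
      change LA (P0 g) b = _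
      rw [hP0, hg0]
      rfl
    ext y
    change val g y = F y
    by_cases hy : y ∈ A
    · rw [hval1 _ ⟨y, hy⟩, hfA]
    · rw [hval2 _ ⟨y, hy⟩]
      have : ∀ j ∈ ρ.finsupport ⟨y, hy⟩, ρ j ⟨y, hy⟩ * G g j y = ρ j ⟨y, hy⟩ * F y := by
        intro j hj
        rw [ρ.mem_finsupport] at hj
        have hj' : ρ j ⟨y, hy⟩ ≠ 0 := hj
        have hyD := hρD j _ hj'
        have h1 := hgv j y hyD
        congr 1
        simp only [G]
        rw [hfA, hginf]
        have h2 : ∑ i, (g (pt j i y) - 0) = ∑ i, gg j i (φ j i y) := by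
          refine Finset.sum_congr rfl fun i _ => ?_
          rw [sub_zero]
          change g ((Sum.inr ⟨j, i⟩, φ j i y) : J × unitInterval) = _
          rw [hgγ]
          change (if ∃ w, ρ j w ≠ 0 then gg j i else 0) (φ j i y) = _
          rw [if_pos ⟨_, hj'⟩]
        rw [h2, ← h1]
        simp [H]
      rw [Finset.sum_congr rfl this, ← Finset.sum_mul, ρ.sum_finsupport (mem_univ _), one_mul]

lemma fdI_step_closed {K : Type*} [TopologicalSpace K] (S : Set K) (hS : IsClosed S) :
    IsClosed (S \ fdI K S) := by
  have : S \ fdI K S = S ∩ (⋃ (U : Set K) (_ : IsOpen U ∧ FinDimSpace ↥(U ∩ S)), U)ᶜ := by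
    ext x
    simp only [fdI, Set.mem_sdiff, mem_inter_iff, mem_compl_iff, mem_iUnion, exists_prop, mem_ofPred_eq]
    constructor
    · rintro ⟨hx, h⟩
      exact ⟨hx, fun ⟨U, ⟨hU, hf⟩, hxU⟩ => h ⟨hx, U, hU, hxU, hf⟩⟩
    · rintro ⟨hx, h⟩
      exact ⟨hx, fun ⟨_, U, hU, hxU, hf⟩ => h ⟨U, ⟨hU, hf⟩, hxU⟩⟩
  rw [this]
  exact hS.inter (isOpen_iUnion fun U => isOpen_iUnion fun h => h.1).isClosed_compl

lemma fdDerived_zero (K : Type*) [TopologicalSpace K] : fdDerived K 0 = univ := by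
  unfold fdDerived; exact Ordinal.limitRecOn_zero _ _ _

lemma fdDerived_succ (K : Type*) [TopologicalSpace K] (o : Ordinal) :
    fdDerived K (o + 1) = fdDerived K o \ fdI K (fdDerived K o) := by
  unfold fdDerived; exact Ordinal.limitRecOn_add_one _ _ _ _

lemma LD_point {X : Type*} [TopologicalSpace X] [Subsingleton X] [Nonempty X] [T2Space X]
    [CompactSpace X] : LDominates unitInterval X :=
  LD_embed (fun _ => 0) ((continuous_const).isClosedEmbedding fun _ _ _ => Subsingleton.elim _ _)

/-- one step -/
lemma step {K : Type*} [TopologicalSpace K] [CompactSpace K] [TopologicalSpace.MetrizableSpace K]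
    (S : Set K) (hS : IsClosed S) (hne : S.Nonempty)
    (ih : (S \ fdI K S).Nonempty → LDominates unitInterval ↥(S \ fdI K S)) :
    LDominates unitInterval S := by
  letI := TopologicalSpace.metrizableSpaceMetric K
  have hcS : CompactSpace S := isCompact_iff_compactSpace.1 hS.isCompact
  have hloc : ∀ x : S, (x : K) ∈ fdI K S → ∃ U : Set S, IsOpen U ∧ x ∈ U ∧ FinDimSpace U := by
    rintro x ⟨_, U, hU, hxU, n, hn⟩
    refine ⟨Subtype.val ⁻¹' U, hU.preimage continuous_subtype_val, hxU, n, ?_⟩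
    let e : (Subtype.val ⁻¹' U : Set S) ≃ₜ ↥(U ∩ S) :=
      { toFun := fun y => ⟨y.1.1, y.2, y.1.2⟩
        invFun := fun y => ⟨⟨y.1, y.2.2⟩, y.2.1⟩
        left_inv := fun _ => rfl
        right_inv := fun _ => rfl
        continuous_toFun := by fun_prop
        continuous_invFun := by fun_prop }
    exact cov_closed e e.isClosedEmbedding hn
  by_cases hne' : (S \ fdI K S).Nonempty
  · have hcl := fdI_step_closed S hS
    have hc' : CompactSpace ↥(S \ fdI K S) := isCompact_iff_compactSpace.1 hcl.isCompact
    refine glue (Subtype.val ⁻¹' (S \ fdI K S)) (hcl.preimage continuous_subtype_val) ?_ ?_ ?_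
    · obtain ⟨x, hx⟩ := hne'
      exact ⟨⟨x, hx.1⟩, hx⟩
    · intro x hx
      refine hloc x ?_
      by_contra h
      exact hx ⟨x.2, h⟩
    · refine LD_trans (ih hne') ?_
      let e : (Subtype.val ⁻¹' (S \ fdI K S) : Set S) ≃ₜ ↥(S \ fdI K S) :=
        { toFun := fun y => ⟨y.1.1, y.2⟩
          invFun := fun y => ⟨⟨y.1, y.2.1⟩, y.2⟩
          left_inv := fun _ => rfl
          right_inv := fun _ => rfl
          continuous_toFun := by fun_prop
          continuous_invFun := by fun_prop }
      exact LD_embed e e.isClosedEmbedding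
  · obtain ⟨x, hx⟩ := hne
    refine glue ({⟨x, hx⟩} : Set S) isClosed_singleton (singleton_nonempty _) ?_ LD_point
    intro y _
    refine hloc y ?_
    by_contra h
    exact hne' ⟨y, y.2, h⟩

lemma fdDerived_closed (K : Type*) [TopologicalSpace K] (n : ℕ) :
    IsClosed (fdDerived K (n : Ordinal)) := by
  induction n with
  | zero => rw [Nat.cast_zero, fdDerived_zero]; exact isClosed_univ
  | succ n ih => rw [Nat.cast_succ, fdDerived_succ]; exact fdI_step_closed _ ih

end FdAux

/-- a nonempty compact metrizable space with finite fd-height is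
ℓ-dominated by the unit interval. -/
theorem interval_ellDominates_of_finite_fdHeight
    (K : Type*) [TopologicalSpace K] [CompactSpace K]
    [TopologicalSpace.MetrizableSpace K] [Nonempty K]
    (hfd : ∃ n : ℕ, fdDerived K (n : Ordinal) = ∅) :
    LDominates unitInterval K := by
  obtain ⟨n, hn⟩ := hfd
  have key : ∀ d k : ℕ, k + d = n → (fdDerived K (k : Ordinal)).Nonempty →
      LDominates unitInterval ↥(fdDerived K (k : Ordinal)) := by
    intro d
    induction d with
    | zero =>
      intro k hk hne
      rw [add_zero] at hk
      rw [hk, hn] at hne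
      exact absurd hne Set.not_nonempty_empty
    | succ d ih =>
      intro k hk hne
      refine FdAux.step _ (FdAux.fdDerived_closed K k) hne ?_
      have := ih (k + 1) (by omega)
      rw [Nat.cast_succ, FdAux.fdDerived_succ] at this
      exact this
  have h0 := key n 0 (by omega)
  rw [Nat.cast_zero, FdAux.fdDerived_zero] at h0
  refine FdAux.LD_trans (h0 Set.univ_nonempty) ?_
  exact FdAux.LD_embed _ (Homeomorph.Set.univ K).symm.isClosedEmbedding

end
end

section
/- For every real number c > 1 and every positive integer n, there exists a c-good map L_n : C_p(I) → C_p(Iⁿ), where I = [0,1]; in particular, L_n is a continuous linear surjection of C_p(I) onto C_p(Iⁿ) with ‖L_n‖ ≤ 1 such that every f ∈ C(Iⁿ) has a preimage g ∈ C(I) with ‖g‖ ≤ c·‖f‖. -/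
open Set Function

noncomputable section

lemma aux_inj {ι : Type*} (w : ι → unitInterval) {ε : ℝ} (hε : 0 < ε)
    (s : Finset ι) : ∃ v : ι → unitInterval, Set.InjOn v s ∧ ∀ i, dist (v i) (w i) < ε := by
  classical
  induction s using Finset.induction_on with
  | empty => exact ⟨w, by simp, by simpa using fun _ => hε⟩
  | insert a s ha ih =>
    obtain ⟨v, hv, hd⟩ := ih
    have hinf : (Metric.ball (w a) ε).Infinite :=
      infinite_of_mem_nhds (w a) (Metric.ball_mem_nhds _ hε)
    obtain ⟨z, hz, hzn⟩ := hinf.exists_notMem_finset (s.image v)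
    refine ⟨Function.update v a z, ?_, ?_⟩
    · rw [Finset.coe_insert, Set.injOn_insert (by simpa using ha)]
      have hne : ∀ i ∈ s, Function.update v a z i = v i := by
        intro i hi
        rw [Function.update_of_ne]
        rintro rfl
        exact ha hi
      constructor
      · intro i hi j hj hij
        rw [hne i hi, hne j hj] at hij
        exact hv hi hj hij
      · rintro ⟨i, hi, hij⟩
        rw [hne i hi, Function.update_self] at hij
        exact hzn (Finset.mem_image.2 ⟨i, hi, hij⟩)
    · intro i
      by_cases h : i = a
      · subst h; simpa using hz
      · rw [Function.update_of_ne h]; exact hd i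

lemma aux_perturb {Y D : Type*} [TopologicalSpace Y] [T2Space Y] [CompactSpace Y] [TopologicalSpace D]
    [DiscreteTopology D] (A : Set Y) (hA : IsClosed A) (idx : A → D) (hidx : Continuous idx)
    (Φ : C(Y, unitInterval)) {ε : ℝ} (hε : 0 < ε)
    (h : ∀ a b : A, idx a = idx b → dist (Φ a) (Φ b) < ε) (F : C(Y, ℝ)) :
    ∃ (Φ' : C(Y, unitInterval)) (g : C(unitInterval, ℝ)), dist Φ' Φ ≤ 2 * ε ∧ ‖g‖ ≤ ‖F‖ ∧
      ∀ a : A, ∃ b : A, idx b = idx a ∧ g (Φ' a) = F b := by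
  classical
  haveI : CompactSpace A := isCompact_iff_compactSpace.1 hA.isCompact
  have hfin : (Set.range idx).Finite := (isCompact_range hidx).finite_of_discrete
  haveI : Finite (Set.range idx) := hfin
  haveI := Fintype.ofFinite (Set.range idx)
  choose rep hrep using fun i : Set.range idx => i.2
  obtain ⟨v, hv, hvd⟩ := aux_inj (fun i => Φ (rep i)) hε (Finset.univ : Finset (Set.range idx))
  have hv' : Function.Injective v := by
    intro i j hij
    exact hv (by simp) (by simp) hij
  let J : A → Set.range idx := fun a => ⟨idx a, a, rfl⟩
  have hJ : Continuous J := hidx.subtype_mk _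
  have hvc : Continuous v := continuous_of_discreteTopology
  have hdist : ∀ a : A, |(v (J a) : ℝ) - Φ a| < 2 * ε := by
    intro a
    have h1 := hvd (J a)
    have h2 := h (rep (J a)) a (hrep (J a))
    have h3 := dist_triangle (v (J a)) (Φ (rep (J a))) (Φ a)
    have : dist (v (J a)) (Φ a) = |(v (J a) : ℝ) - Φ a| := rfl
    linarith
  let d0 : C(A, ℝ) := ⟨fun a => (v (J a) : ℝ) - Φ a, by fun_prop⟩
  obtain ⟨d, hd, hdr⟩ := ContinuousMap.exists_restrict_eq_forall_mem_of_closed d0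
    (t := Set.Icc (-(2 * ε)) (2 * ε)) (fun a => by
      have := abs_lt.1 (hdist a)
      exact ⟨this.1.le, this.2.le⟩) ⟨0, by constructor <;> linarith⟩ hA
  obtain ⟨g, hg, hgr⟩ := ContinuousMap.exists_extension_forall_mem_of_isClosedEmbedding
    (⟨fun i => F (rep i), continuous_of_discreteTopology⟩ : C(Set.range idx, ℝ))
    (t := Set.Icc (-‖F‖) ‖F‖) (e := v) (fun i => by
      have := abs_le.1 (F.norm_coe_le_norm (rep i))
      exact this) ⟨0, by constructor <;> linarith [norm_nonneg F]⟩
    (hvc.isClosedEmbedding hv')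
  let Φ' : C(Y, unitInterval) :=
    ⟨fun y => Set.projIcc 0 1 zero_le_one ((Φ y : ℝ) + d y), by
      exact continuous_projIcc.comp (by fun_prop)⟩
  have hΦ' : ∀ a : A, Φ' a = v (J a) := by
    intro a
    have h1 : d a = (v (J a) : ℝ) - Φ a := DFunLike.congr_fun hdr a
    change Set.projIcc 0 1 zero_le_one ((Φ a : ℝ) + d a) = _
    rw [h1, add_sub_cancel, Set.projIcc_val]
  refine ⟨Φ', g, ?_, ?_, ?_⟩
  · rw [ContinuousMap.dist_le (by linarith)]
    intro y
    have h1 := Set.abs_projIcc_sub_projIcc (zero_le_one' ℝ) (c := (Φ y : ℝ) + d y) (d := Φ y)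
    rw [Set.projIcc_val, add_sub_cancel_left] at h1
    exact h1.trans (abs_le.2 (hd y))
  · rw [ContinuousMap.norm_le _ (norm_nonneg _)]
    intro y
    exact abs_le.2 (hg y)
  · intro a
    refine ⟨rep (J a), hrep (J a), ?_⟩
    rw [hΦ']
    exact congrFun hgr (J a)

def auxS (m N : ℕ) (t : unitInterval) (k : Fin m) : ℝ := N * (t : ℝ) - (k : ℝ) / m

lemma aux_bad {m N : ℕ} (hm : 0 < m) (t : unitInterval) (k k' : Fin m) (j j' : ℤ)
    (h : |auxS m N t k - j| < 1 / (2 * m)) (h' : |auxS m N t k' - j'| < 1 / (2 * m)) :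
    k = k' := by
  have hm' : (0 : ℝ) < m := by exact_mod_cast hm
  unfold auxS at h h'
  have h1 : |((k' : ℝ) - k) / m - (j - j')| < 1 / m := by
    have e : ((k' : ℝ) - k) / m - (j - j') =
      (N * (t : ℝ) - (k : ℝ) / m - j) - (N * (t : ℝ) - (k' : ℝ) / m - j') := by ring
    rw [e]
    refine (abs_sub _ _).trans_lt ?_
    have : (1 : ℝ) / m = 1 / (2 * m) + 1 / (2 * m) := by field_simp; norm_num
    linarith
  have h2 : |((k' : ℝ) - k) - m * (j - j')| < 1 := by
    have e : ((k' : ℝ) - k) - m * (j - j') = m * (((k' : ℝ) - k) / m - (j - j')) := by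
      field_simp
    rw [e, abs_mul, abs_of_pos hm']
    calc _ < m * (1 / (m : ℝ)) := by gcongr
      _ = 1 := by field_simp
  have h3 : |((k' : ℤ) - k) - m * (j - j')| < 1 := by exact_mod_cast h2
  rw [Int.abs_lt_one_iff] at h3
  have hk := k.2
  have hk' := k'.2
  have h4 : (k' : ℤ) - k = m * (j - j') := by linarith
  have h5 : (j - j') = 0 := by
    by_contra hne
    have hlt : |(k' : ℤ) - k| < m := by rw [abs_lt]; constructor <;> omega
    rw [h4, abs_mul] at hlt
    have : 1 ≤ |j - j'| := Int.one_le_abs hne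
    have hmz : |(m : ℤ)| = m := abs_of_nonneg (by positivity)
    rw [hmz] at hlt
    nlinarith
  rw [h5] at h4
  ext
  omega

lemma aux_geom (n m : ℕ) (hm : 0 < m) {η : ℝ} (hη : 0 < η) :
    ∃ (A : Set ((Fin n → unitInterval) × Fin m)) (idx : A → (Fin n → ℤ) × Fin m),
      IsClosed A ∧ Continuous idx ∧
      (∀ a b : A, idx a = idx b → dist a.1.1 b.1.1 < η ∧ a.1.2 = b.1.2) ∧
      ∀ x, {k : Fin m | (x, k) ∉ A}.ncard ≤ n := by
  classical
  have hm' : (0 : ℝ) < m := by exact_mod_cast hm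
  obtain ⟨N, hN⟩ := exists_nat_gt (1 / η)
  have hN0 : (0 : ℝ) < N := lt_trans (by positivity) hN
  let S : (Fin n → unitInterval) × Fin m → Fin n → ℝ := fun y i => auxS m N (y.1 i) y.2
  have hS : ∀ i, Continuous fun y => S y i := by
    intro i
    have : Continuous fun k : Fin m => (k : ℝ) := continuous_of_discreteTopology
    simp only [S, auxS]
    fun_prop
  refine ⟨{y | ∀ i, ∀ j : ℤ, 1 / (2 * m) ≤ |S y i - j|},
    fun a => (fun i => ⌊S a i⌋, a.1.2), ?_, ?_, ?_, ?_⟩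
  · simp only [Set.ofPred_forall]
    refine isClosed_iInter fun i => isClosed_iInter fun j => ?_
    exact isClosed_le continuous_const (((hS i).sub continuous_const).abs)
  · refine Continuous.prodMk (continuous_pi fun i => ?_) (by fun_prop)
    rw [continuous_iff_continuousAt]
    intro a
    have ha : (⌊S a i⌋ : ℝ) < S a i := by
      refine lt_of_le_of_ne (Int.floor_le _) ?_
      intro he
      have h1 := a.2 i ⌊S a i⌋
      rw [← he] at h1
      simp only [Int.floor_intCast, sub_self, abs_zero] at h1
      have : 0 < 1 / (2 * (m : ℝ)) := by positivity
      linarith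
    have hc : ContinuousAt (fun b : {y | ∀ i, ∀ j : ℤ, 1 / (2 * (m : ℝ)) ≤ |S y i - j|} => S b i) a :=
      ((hS i).comp continuous_subtype_val).continuousAt
    have hev := hc.eventually (Ioo_mem_nhds ha (Int.lt_floor_add_one _))
    refine (tendsto_const_nhds (x := ⌊S a i⌋)).congr' ?_
    filter_upwards [hev] with b hb
    exact (Int.floor_eq_iff.2 ⟨hb.1.le, hb.2⟩).symm
  · rintro ⟨⟨a, k⟩, ha⟩ ⟨⟨b, l⟩, hb⟩ h
    simp only [Prod.mk.injEq] at h
    obtain ⟨h, rfl⟩ := h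
    refine ⟨?_, rfl⟩
    change dist a b < η
    rw [dist_pi_lt_iff hη]
    intro i
    have h1 := Int.abs_sub_lt_one_of_floor_eq_floor (congrFun h i)
    simp only [S, auxS] at h1
    rw [sub_sub_sub_cancel_right, ← mul_sub, abs_mul, abs_of_pos hN0] at h1
    change |(a i : ℝ) - b i| < η
    have h2 : 1 < N * η := by rwa [div_lt_iff₀ hη] at hN
    by_contra! h3
    have := mul_le_mul_of_nonneg_left h3 hN0.le
    linarith
  · intro x
    have hsub : {k : Fin m | (x, k) ∉ {y | ∀ i, ∀ j : ℤ, 1 / (2 * (m : ℝ)) ≤ |S y i - j|}} ⊆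
        ⋃ i ∈ (Finset.univ : Finset (Fin n)), {k : Fin m | ∃ j : ℤ, |S (x, k) i - j| < 1 / (2 * m)} := by
      intro k hk
      simpa using hk
    have h1 : ∀ i, {k : Fin m | ∃ j : ℤ, |S (x, k) i - j| < 1 / (2 * m)}.ncard ≤ 1 := by
      intro i
      rw [Set.ncard_le_one]
      rintro k ⟨j, hj⟩ k' ⟨j', hj'⟩
      exact aux_bad hm _ _ _ _ _ hj hj'
    calc _ ≤ _ := Set.ncard_le_ncard hsub
      _ ≤ _ := Finset.set_ncard_biUnion_le _ _
      _ ≤ ∑ i : Fin n, 1 := Finset.sum_le_sum fun i _ => h1 i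
      _ = n := by simp

def auxL {X : Type*} [TopologicalSpace X] {m : ℕ} (Φ : C(X × Fin m, unitInterval)) :
    C(unitInterval, ℝ) →ₗ[ℝ] C(X, ℝ) where
  toFun g := (1 / (m : ℝ)) • ∑ k : Fin m, (g.comp Φ).comp ⟨fun x => (x, k), by fun_prop⟩
  map_add' g g' := by
    ext x
    simp [Finset.sum_add_distrib, mul_add]
  map_smul' r g := by
    ext x
    simp only [ContinuousMap.coe_smul, ContinuousMap.coe_sum, Pi.smul_apply, Finset.sum_apply,
      ContinuousMap.comp_apply, smul_eq_mul, RingHom.id_apply, ← Finset.mul_sum]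
    ring

lemma auxL_apply {X : Type*} [TopologicalSpace X] {m : ℕ} (Φ : C(X × Fin m, unitInterval))
    (g : C(unitInterval, ℝ)) (x : X) :
    auxL Φ g x = (1 / (m : ℝ)) * ∑ k : Fin m, g (Φ (x, k)) := by
  simp [auxL]

lemma auxL_norm {X : Type*} [TopologicalSpace X] [CompactSpace X] {m : ℕ} (hm : 0 < m)
    (Φ : C(X × Fin m, unitInterval)) (g : C(unitInterval, ℝ)) : ‖auxL Φ g‖ ≤ ‖g‖ := by
  have hm' : (0 : ℝ) < m := by exact_mod_cast hm
  rw [ContinuousMap.norm_le _ (norm_nonneg _)]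
  intro x
  rw [auxL_apply, norm_mul, Real.norm_of_nonneg (by positivity)]
  calc _ ≤ 1 / (m : ℝ) * ∑ k : Fin m, ‖g‖ := by
        gcongr
        exact norm_sum_le_of_le _ fun k _ => g.norm_coe_le_norm _
    _ = ‖g‖ := by simp; field_simp

lemma auxL_cont {X : Type*} [TopologicalSpace X] {m : ℕ} (Φ : C(X × Fin m, unitInterval)) :
    @Continuous _ _ (ptTop unitInterval) (ptTop X) (auxL Φ) := by
  letI := ptTop unitInterval
  refine continuous_induced_rng.2 (continuous_pi fun x => ?_)
  have he : ∀ t : unitInterval, Continuous fun g : C(unitInterval, ℝ) => g t := fun t =>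
    (continuous_apply t).comp continuous_induced_dom
  have : (fun g : C(unitInterval, ℝ) => (1 / (m : ℝ)) * ∑ k : Fin m, g (Φ (x, k))) =
      fun g => ((fun f : C(X, ℝ) => (f : X → ℝ)) ∘ auxL Φ) g x := by
    funext g
    exact (auxL_apply Φ g x).symm
  rw [← this]
  exact continuous_const.mul (continuous_finsetSum _ fun k _ => he _)

lemma auxL_contΦ {X : Type*} [TopologicalSpace X] [CompactSpace X] {m : ℕ}
    (g : C(unitInterval, ℝ)) :
    Continuous fun Φ : C(X × Fin m, unitInterval) => auxL Φ g := by
  change Continuous fun Φ : C(X × Fin m, unitInterval) =>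
    (1 / (m : ℝ)) • ∑ k : Fin m, (g.comp Φ).comp ⟨fun x => (x, k), by fun_prop⟩
  have hs : Continuous fun Φ : C(X × Fin m, unitInterval) =>
      ∑ k : Fin m, (g.comp Φ).comp (⟨fun x => (x, k), by fun_prop⟩ : C(X, X × Fin m)) := by
    apply continuous_finsetSum
    intro k _
    exact (ContinuousMap.continuous_precomp _).comp (ContinuousMap.continuous_postcomp g)
  exact hs.const_smul (1 / (m : ℝ))

lemma aux_dense (n m : ℕ) (hm : 0 < m) {θ : ℝ} (hθ : 0 < θ) (hmn : 2 * n / (m : ℝ) < θ / 2)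
    (f : C(Fin n → unitInterval, ℝ)) (hf : f ≠ 0) :
    Dense {Φ : C((Fin n → unitInterval) × Fin m, unitInterval) |
      ∃ g : C(unitInterval, ℝ), ‖g‖ ≤ ‖f‖ ∧ ‖f - auxL Φ g‖ < θ * ‖f‖} := by
  classical
  have hm' : (0 : ℝ) < m := by exact_mod_cast hm
  have hf0 : 0 < ‖f‖ := norm_pos_iff.2 hf
  rw [Metric.dense_iff]
  intro Φ r hr
  let F : C((Fin n → unitInterval) × Fin m, ℝ) := f.comp ⟨Prod.fst, continuous_fst⟩
  obtain ⟨η₁, hη₁, h₁⟩ := Metric.uniformContinuous_iff.1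
    (CompactSpace.uniformContinuous_of_continuous
      (f := fun (x : Fin n → unitInterval) (k : Fin m) => Φ (x, k)) (by fun_prop))
    (r / 4) (by positivity)
  obtain ⟨η₂, hη₂, h₂⟩ := Metric.uniformContinuous_iff.1
    (CompactSpace.uniformContinuous_of_continuous f.continuous) (θ / 2 * ‖f‖) (by positivity)
  obtain ⟨A, idx, hA, hidx, hd, hcard⟩ := aux_geom n m hm (lt_min hη₁ hη₂)
  obtain ⟨Φ', g, hΦ', hg, hgA⟩ := aux_perturb A hA idx hidx Φ (ε := r / 4) (by positivity)
    (fun a b hab => by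
      obtain ⟨h3, h4⟩ := hd a b hab
      have h5 := (dist_pi_lt_iff (by positivity)).1
        (h₁ (lt_of_lt_of_le h3 (min_le_left _ _))) a.1.2
      obtain ⟨⟨a1, a2⟩, ha⟩ := a
      obtain ⟨⟨b1, b2⟩, hb⟩ := b
      simp only at h4 h5 ⊢
      subst h4
      exact h5) F
  have hFf : ‖F‖ ≤ ‖f‖ := by
    rw [ContinuousMap.norm_le _ (norm_nonneg _)]
    intro y
    exact f.norm_coe_le_norm _
  refine ⟨Φ', ?_, g, hg.trans hFf, ?_⟩
  · rw [Metric.mem_ball]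
    linarith
  · have key : ‖f - auxL Φ' g‖ ≤ θ / 2 * ‖f‖ + 2 * n / (m : ℝ) * ‖f‖ := by
      rw [ContinuousMap.norm_le _ (by positivity)]
      intro x
      have e : (f - auxL Φ' g) x = 1 / (m : ℝ) * ∑ k : Fin m, (f x - g (Φ' (x, k))) := by
        rw [ContinuousMap.sub_apply, auxL_apply, Finset.sum_sub_distrib]
        simp only [Finset.sum_const, Finset.card_univ, Fintype.card_fin, nsmul_eq_mul]
        field_simp
      have hterm : ∀ k : Fin m, ‖f x - g (Φ' (x, k))‖ ≤
          θ / 2 * ‖f‖ + if (x, k) ∉ A then 2 * ‖f‖ else 0 := by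
        intro k
        by_cases hk : (x, k) ∈ A
        · rw [if_neg (by simpa using hk), add_zero]
          obtain ⟨b, hb, hgb⟩ := hgA ⟨(x, k), hk⟩
          have h3 := h₂ (lt_of_lt_of_le (hd _ _ hb.symm).1 (min_le_right _ _))
          change g (Φ' (x, k)) = F b at hgb
          rw [hgb]
          exact h3.le
        · rw [if_pos hk]
          have h3 := norm_sub_le (f x) (g (Φ' (x, k)))
          have h4 := f.norm_coe_le_norm x
          have h5 := g.norm_coe_le_norm (Φ' (x, k))
          have : 0 ≤ θ / 2 * ‖f‖ := by positivity
          linarith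
      have hsum : ‖∑ k : Fin m, (f x - g (Φ' (x, k)))‖ ≤ m * (θ / 2 * ‖f‖) + n * (2 * ‖f‖) := by
        refine (norm_sum_le_of_le _ fun k _ => hterm k).trans ?_
        rw [Finset.sum_add_distrib, ← Finset.sum_filter]
        simp only [Finset.sum_const, Finset.card_univ, Fintype.card_fin, nsmul_eq_mul]
        have hc := hcard x
        rw [Set.ncard_eq_toFinset_card', Set.toFinset_setOf] at hc
        gcongr
      rw [e, norm_mul, Real.norm_of_nonneg (by positivity)]
      calc _ ≤ 1 / (m : ℝ) * (m * (θ / 2 * ‖f‖) + n * (2 * ‖f‖)) := by gcongr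
        _ = _ := by field_simp
    have := mul_lt_mul_of_pos_right hmn hf0
    linarith

lemma aux_iter {E F : Type*} [NormedAddCommGroup E] [NormedSpace ℝ E] [CompleteSpace E]
    [NormedAddCommGroup F] [NormedSpace ℝ F] (L : E →ₗ[ℝ] F) (hL : ∀ g, ‖L g‖ ≤ ‖g‖)
    {a b : ℝ} (ha : 0 ≤ a) (hb : 0 ≤ b) (hb1 : b < 1)
    (h : ∀ f : F, ∃ g : E, ‖g‖ ≤ a * ‖f‖ ∧ ‖f - L g‖ ≤ b * ‖f‖) (f : F) :
    ∃ g, L g = f ∧ ‖g‖ ≤ a / (1 - b) * ‖f‖ := by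
  choose G hG hGL using h
  let r : ℕ → F := fun k => (fun f => f - L (G f))^[k] f
  have hr : ∀ k, r (k + 1) = r k - L (G (r k)) := fun k => Function.iterate_succ_apply' _ _ _
  have hrn : ∀ k, ‖r k‖ ≤ b ^ k * ‖f‖ := by
    intro k
    induction k with
    | zero => simp [r]
    | succ k ih =>
      rw [hr, pow_succ']
      calc _ ≤ b * ‖r k‖ := hGL _
        _ ≤ b * (b ^ k * ‖f‖) := by gcongr
        _ = _ := by ring
  have hGn : ∀ k, ‖G (r k)‖ ≤ a * ‖f‖ * b ^ k := by
    intro k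
    calc _ ≤ a * ‖r k‖ := hG _
      _ ≤ a * (b ^ k * ‖f‖) := by gcongr; exact hrn k
      _ = _ := by ring
  have hgeo : HasSum (fun k => a * ‖f‖ * b ^ k) (a * ‖f‖ * (1 - b)⁻¹) :=
    (hasSum_geometric_of_lt_one hb hb1).mul_left _
  have hsum : Summable fun k => G (r k) := Summable.of_norm_bounded hgeo.summable hGn
  let L' : E →L[ℝ] F := L.mkContinuous 1 (by simpa using hL)
  refine ⟨∑' k, G (r k), ?_, ?_⟩
  · have h1 : HasSum (fun k => L (G (r k))) (L (∑' k, G (r k))) := L'.hasSum hsum.hasSum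
    have h2 := h1.tendsto_sum_nat
    have h3 : ∀ N, ∑ k ∈ Finset.range N, L (G (r k)) = f - r N := by
      intro N
      induction N with
      | zero => simp [r]
      | succ N ih => rw [Finset.sum_range_succ, ih, hr]; abel
    have h4 : Filter.Tendsto r Filter.atTop (nhds 0) := by
      refine squeeze_zero_norm hrn ?_
      simpa using (tendsto_pow_atTop_nhds_zero_of_lt_one hb hb1).mul_const ‖f‖
    simp only [h3] at h2
    have h5 := h4.const_sub f
    rw [sub_zero] at h5
    exact tendsto_nhds_unique h2 h5
  · refine (tsum_of_norm_bounded hgeo hGn).trans (le_of_eq ?_)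
    rw [div_eq_mul_inv]; ring

/-- for each `c > 1` and `n ≥ 1` there is a c-good (in particular
continuous linear surjective, norm ≤ 1, small-kernel) map of `C_p(I)` onto `C_p(Iⁿ)`. -/
theorem exists_cGood_unitInterval_to_cube (c : ℝ) (hc : 1 < c) (n : ℕ) (hn : 0 < n) :
    ∃ L : C(unitInterval, ℝ) →ₗ[ℝ] C(Fin n → unitInterval, ℝ),
      IsCGoodMap c L ∧ Surjective L := by
  have h3c : 0 < 3 * c + 1 := by linarith
  set θ : ℝ := (c - 1) / (3 * c + 1) with hθdef
  have hθ : 0 < θ := div_pos (by linarith) h3c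
  have hθ3 : 3 * θ < 1 := by
    rw [hθdef, mul_div_assoc', div_lt_one h3c]; linarith
  have hθc : (1 + θ) / (1 - 3 * θ) = c := by
    rw [div_eq_iff (by linarith), hθdef]; field_simp; ring
  obtain ⟨m, hm⟩ := exists_nat_gt (2 * n / (θ / 2))
  have hm0' : (0 : ℝ) < m := lt_of_le_of_lt (by positivity) hm
  have hm0 : 0 < m := by exact_mod_cast hm0'
  have hmn : 2 * n / (m : ℝ) < θ / 2 := by
    rw [div_lt_iff₀ (by positivity)] at hm
    rw [div_lt_iff₀ hm0']; linarith
  let X := Fin n → unitInterval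
  let U : ℕ → Set C(X × Fin m, unitInterval) := fun i =>
    {Φ | TopologicalSpace.denseSeq C(X, ℝ) i ≠ 0 → ∃ g : C(unitInterval, ℝ),
      ‖g‖ ≤ ‖TopologicalSpace.denseSeq C(X, ℝ) i‖ ∧
      ‖TopologicalSpace.denseSeq C(X, ℝ) i - auxL Φ g‖ <
        θ * ‖TopologicalSpace.denseSeq C(X, ℝ) i‖}
  have hUo : ∀ i, IsOpen (U i) := by
    intro i
    by_cases h0 : TopologicalSpace.denseSeq C(X, ℝ) i = 0
    · simp [U, h0]
    · simp only [U, ne_eq, h0, not_false_eq_true, true_imp_iff, Set.ofPred_exists, Set.ofPred_and]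
      refine isOpen_iUnion fun g => IsOpen.inter isOpen_const ?_
      exact isOpen_lt (continuous_const.sub (auxL_contΦ g)).norm continuous_const
  have hUd : ∀ i, Dense (U i) := by
    intro i
    by_cases h0 : TopologicalSpace.denseSeq C(X, ℝ) i = 0
    · simp [U, h0]
    · simp only [U, ne_eq, h0, not_false_eq_true, true_imp_iff]
      exact aux_dense n m hm0 hθ hmn _ h0
  obtain ⟨Φ, hΦ⟩ := (dense_iInter_of_isOpen hUo hUd).nonempty
  rw [Set.mem_iInter] at hΦ
  have happ : ∀ f : C(X, ℝ), ∃ g : C(unitInterval, ℝ),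
      ‖g‖ ≤ (1 + θ) * ‖f‖ ∧ ‖f - auxL Φ g‖ ≤ 3 * θ * ‖f‖ := by
    intro f
    by_cases hf : f = 0
    · exact ⟨0, by simp [hf]⟩
    have hf0 : 0 < ‖f‖ := norm_pos_iff.2 hf
    obtain ⟨_, hfi, i, rfl⟩ := Metric.dense_iff.1 (TopologicalSpace.denseRange_denseSeq C(X, ℝ)) f
      (θ * ‖f‖) (by positivity)
    set f' := TopologicalSpace.denseSeq C(X, ℝ) i with hf'
    rw [Metric.mem_ball, dist_eq_norm] at hfi
    have hle : ‖f'‖ ≤ (1 + θ) * ‖f‖ := by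
      have := norm_le_norm_add_norm_sub' f' f
      linarith
    have hne : f' ≠ 0 := by
      intro h
      rw [h, zero_sub, norm_neg] at hfi
      nlinarith
    obtain ⟨g, hg, hgL⟩ := hΦ i hne
    refine ⟨g, hg.trans hle, ?_⟩
    have h1 : ‖f - auxL Φ g‖ ≤ ‖f - f'‖ + ‖f' - auxL Φ g‖ := norm_sub_le_norm_sub_add_norm_sub _ _ _
    rw [norm_sub_rev f f'] at h1
    have h2 : θ * ‖f'‖ ≤ θ * ((1 + θ) * ‖f‖) := by gcongr
    have h3 : θ * ((1 + θ) * ‖f‖) ≤ 2 * θ * ‖f‖ := by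
      have : θ * (1 + θ) ≤ 2 * θ := by nlinarith
      nlinarith
    linarith
  have hfin := aux_iter (auxL Φ) (auxL_norm hm0 Φ) (by linarith) (by linarith) hθ3 happ
  rw [hθc] at hfin
  exact ⟨auxL Φ, ⟨auxL_cont Φ, auxL_norm hm0 Φ, hfin⟩, fun f => (hfin f).imp fun g hg => hg.1⟩

end
end

section
/- For every real number c > 1 and every nonempty compact metrizable finite dimensional (covering dimension) space K, there is a c-good map of C_p(I) onto C_p(K), where I = [0,1]. -/
open Set Function

noncomputable section

/-- finite-order separated families -/
def GoodFam {K : Type*} [MetricSpace K] (m n : ℕ) (ε : ℝ) {σ : Type}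
    (B : Fin m → σ → Set K) : Prop :=
  (∀ j s, IsClosed (B j s)) ∧ (∀ j s t, s ≠ t → Disjoint (B j s) (B j t)) ∧
  (∀ j s, ∀ x ∈ B j s, ∀ y ∈ B j s, dist x y < ε) ∧
  (∀ x, {j | ∀ s, x ∉ B j s}.ncard ≤ n + 1)

lemma exists_goodFam {K : Type*} [MetricSpace K] [CompactSpace K] (m n : ℕ)
    (hd : CovDimLE K n) (ε : ℝ) (hε : 0 < ε) :
    ∃ (σ : Type) (_ : Finite σ) (B : Fin m → σ → Set K), GoodFam m n ε B := by
  classical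
  obtain ⟨F, hF⟩ : ∃ F : Finset K, (⋃ x ∈ F, Metric.ball x (ε/2)) = univ := by
    obtain ⟨F, hF⟩ := isCompact_univ.elim_finite_subcover (fun x : K => Metric.ball x (ε/2))
      (fun x => Metric.isOpen_ball) (fun x _ => mem_iUnion.2 ⟨x, Metric.mem_ball_self (by linarith)⟩)
    exact ⟨F, univ_subset_iff.1 hF⟩
  let e := F.equivFin
  obtain ⟨V, hVo, hVs, hVc, hVn⟩ := hd (Fin F.card)
    (fun i => Metric.ball ((e.symm i : F) : K) (ε/2)) inferInstance
    (fun i => Metric.isOpen_ball) (by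
      rw [eq_univ_iff_forall]
      intro x
      have hx : x ∈ ⋃ x ∈ F, Metric.ball x (ε/2) := by rw [hF]; trivial
      simp only [mem_iUnion] at hx ⊢
      obtain ⟨y, hy, hxy⟩ := hx
      exact ⟨e ⟨y, hy⟩, by simpa using hxy⟩)
  obtain ⟨W, hWc, hWcl, hWV⟩ := exists_iUnion_eq_closed_subset hVo (fun x => Set.toFinite _) hVc
  have hp : ∀ i, ∃ p : C(K, ℝ), EqOn p 0 (V i)ᶜ ∧ EqOn p 1 (W i) ∧ ∀ x, p x ∈ Icc (0:ℝ) 1 :=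
    fun i => exists_continuous_zero_one_of_isClosed (hVo i).isClosed_compl (hWcl i)
      (disjoint_compl_left_iff_subset.2 (hWV i))
  choose p hp0 hp1 hp01 using hp
  let t : ℕ → ℝ := fun j => ((j:ℝ)+1)/((m:ℝ)+1)
  have htpos : ∀ j, 0 < t j := fun j => by positivity
  have htmono : StrictMono t := by
    intro a b hab
    have : (a:ℝ) < b := by exact_mod_cast hab
    show ((a:ℝ)+1)/((m:ℝ)+1) < ((b:ℝ)+1)/((m:ℝ)+1)
    gcongr
  have htm : t m = 1 := by
    show ((m:ℝ)+1)/((m:ℝ)+1) = 1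
    exact div_self (by positivity)
  refine ⟨Finset (Fin F.card), inferInstance, fun j S =>
    {x | (∀ i ∈ S, t (j+1) ≤ p i x) ∧ ∀ i, i ∉ S → p i x ≤ t j}, ?_, ?_, ?_, ?_⟩
  · intro j S
    simp only [setOf_and, setOf_forall]
    refine IsClosed.inter ?_ ?_
    · exact isClosed_iInter fun i => isClosed_iInter fun _ =>
        isClosed_le continuous_const (p i).continuous
    · exact isClosed_iInter fun i => isClosed_iInter fun _ =>
        isClosed_le (p i).continuous continuous_const
  · intro j S T hST
    rw [Set.disjoint_left]
    rintro x ⟨h1, h2⟩ ⟨h3, h4⟩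
    apply hST
    have hlt : t j < t (j+1) := htmono (Nat.lt_succ_self _)
    ext i
    by_contra hcon
    by_cases hi : i ∈ S
    · have hiT : i ∉ T := fun h => hcon (by simp [hi, h])
      linarith [h1 i hi, h4 i hiT]
    · have hiT : i ∈ T := by
        by_contra h; exact hcon (by simp [hi, h])
      linarith [h3 i hiT, h2 i hi]
  · rintro j S x ⟨hx1, hx2⟩ y ⟨hy1, hy2⟩
    obtain ⟨i, hi⟩ : ∃ i, x ∈ W i := by
      have : x ∈ ⋃ i, W i := by rw [hWc]; trivial
      simpa using this
    have hiS : i ∈ S := by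
      by_contra h
      have h1 := hx2 i h
      have h2 : p i x = 1 := hp1 i hi
      have h3 : t j < t m := htmono j.2
      linarith
    have key : ∀ z, t (j+1) ≤ p i z → z ∈ V i := by
      intro z hz
      by_contra h
      have h1 : p i z = 0 := hp0 i h
      linarith [htpos (j+1)]
    have h1 := hVs i (key x (hx1 i hiS))
    have h2 := hVs i (key y (hy1 i hiS))
    rw [Metric.mem_ball] at h1 h2
    linarith [dist_triangle_right x y ((e.symm i : F) : K)]
  · intro x
    refine le_trans ?_ (hVn x)
    have hbad : ∀ j : Fin m, j ∈ {j : Fin m | ∀ s : Finset (Fin F.card),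
        x ∉ {x | (∀ i ∈ s, t (j+1) ≤ p i x) ∧ ∀ i, i ∉ s → p i x ≤ t j}} →
        ∃ i, t j < p i x ∧ p i x < t (j+1) := by
      intro j hj
      by_contra hcon
      push Not at hcon
      refine hj (Finset.univ.filter fun i => t j < p i x) ⟨?_, ?_⟩
      · intro i hi
        exact hcon i (by simpa using hi)
      · intro i hi
        simpa using hi
    haveI : Nonempty (Fin F.card) := by
      have : x ∈ ⋃ i, W i := by rw [hWc]; trivial
      obtain ⟨i, -⟩ := mem_iUnion.1 this
      exact ⟨i⟩
    choose! g hg using hbad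
    refine Set.ncard_le_ncard_of_injOn g ?_ ?_ (Set.toFinite _)
    · intro j hj
      by_contra h
      have h1 : p (g j) x = 0 := hp0 _ h
      linarith [(hg j hj).1, htpos j]
    · intro j hj k hk hjk
      have h1 := hg j hj
      have h2 := hg k hk
      rw [← hjk] at h2
      have h3 : (j:ℕ) < k + 1 := htmono.lt_iff_lt.1 (h1.1.trans h2.2)
      have h4 : (k:ℕ) < j + 1 := htmono.lt_iff_lt.1 (h2.1.trans h1.2)
      exact Fin.ext (by omega)

lemma glue {X : Type*} [TopologicalSpace X] [NormalSpace X] {τ : Type} [Finite τ]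
    (D : τ → Set X) (hD : ∀ s, IsClosed (D s)) (hdis : ∀ s t, s ≠ t → Disjoint (D s) (D t))
    (a : τ → ℝ) (M : ℝ) (hM : 0 ≤ M) (ha : ∀ s, |a s| ≤ M) :
    ∃ g : C(X, ℝ), (∀ s, ∀ x ∈ D s, g x = a s) ∧ ∀ x, |g x| ≤ M := by
  classical
  haveI := Fintype.ofFinite τ
  have hu : ∀ s, ∃ u : C(X, ℝ), EqOn u 0 (⋃ t ∈ {t | t ≠ s}, D t) ∧ EqOn u 1 (D s) ∧
      ∀ x, u x ∈ Icc (0:ℝ) 1 := fun s =>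
    exists_continuous_zero_one_of_isClosed
      ((Set.toFinite _).isClosed_biUnion fun t _ => hD t) (hD s) (by
        rw [Set.disjoint_iUnion₂_left]
        exact fun t ht => hdis t s ht)
  choose u hu0 hu1 hu01 using hu
  let h : C(X, ℝ) := ∑ s, a s • u s
  refine ⟨⟨fun x => max (-M) (min M (h x)), by fun_prop⟩, ?_, ?_⟩
  · intro s x hx
    have hh : h x = a s := by
      show (∑ s, a s • u s : C(X, ℝ)) x = a s
      rw [ContinuousMap.sum_apply, Finset.sum_eq_single s]
      · have : u s x = 1 := hu1 s hx
        simp [this]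
      · intro t _ hts
        have : u t x = 0 := hu0 t (by
          simp only [mem_iUnion]
          exact ⟨s, hts.symm, hx⟩)
        simp [this]
      · simp
    have := abs_le.1 (ha s)
    simp only [ContinuousMap.coe_mk, hh]
    rw [min_eq_right this.2, max_eq_right this.1]
  · intro x
    simp only [ContinuousMap.coe_mk]
    rw [abs_le]
    exact ⟨le_max_left _ _, max_le (by linarith) (min_le_left _ _)⟩

lemma exists_inj_near {τ : Type} [Finite τ] (a : τ → ℝ) (r : ℝ) (hr : 0 < r) :
    ∃ c : τ → ℝ, Injective c ∧ ∀ s, |c s - a s| ≤ r := by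
  classical
  obtain ⟨k, ⟨e⟩⟩ := Finite.exists_equiv_fin τ
  have hfin : (Set.range fun q : τ × τ => (a q.1 - a q.2)/((e q.2 : ℕ) - (e q.1 : ℕ) : ℝ)).Finite :=
    Set.finite_range _
  have hk : (0:ℝ) < r/((k:ℝ)+1) := by positivity
  obtain ⟨η, hη, hηn⟩ := (Set.Ioo_infinite hk).exists_notMem_finite hfin
  refine ⟨fun s => a s + η * (e s : ℕ), ?_, ?_⟩
  · intro s t hst
    by_contra hne
    apply hηn
    refine ⟨(s, t), ?_⟩
    have h1 : ((e t : ℕ) : ℝ) - (e s : ℕ) ≠ 0 := by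
      intro h
      have : (e t : ℕ) = (e s : ℕ) := by exact_mod_cast sub_eq_zero.1 h
      exact hne (e.injective (Fin.ext this)).symm
    simp only at hst ⊢
    rw [div_eq_iff h1]
    linarith
  · intro s
    have h1 : ((e s : ℕ) : ℝ) ≤ k := by exact_mod_cast (e s).2.le
    have h2 : (0:ℝ) ≤ (e s : ℕ) := by positivity
    have h3 : η * ((k:ℝ)+1) < r := (lt_div_iff₀ (by positivity)).1 hη.2
    rw [add_sub_cancel_left, abs_of_nonneg (mul_nonneg hη.1.le h2)]
    nlinarith [hη.1]

/-- maps separating a good family at scale `ε` -/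
def SepSet (K : Type*) [MetricSpace K] [CompactSpace K] (m n : ℕ) (ε : ℝ) :
    Set (Fin m → C(K, ℝ)) :=
  {Φ | ∃ (σ : Type) (_ : Finite σ) (B : Fin m → σ → Set K), GoodFam m n ε B ∧
    ∃ δ > 0, ∀ q q' : Fin m × σ, q ≠ q' → ∀ x ∈ B q.1 q.2, ∀ y ∈ B q'.1 q'.2,
      δ ≤ |Φ q.1 x - Φ q'.1 y|}

lemma sepSet_open (K : Type*) [MetricSpace K] [CompactSpace K] (m n : ℕ) (ε : ℝ) :
    IsOpen (SepSet K m n ε) := by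
  rw [Metric.isOpen_iff]
  rintro Φ ⟨σ, hσ, B, hB, δ, hδ, h⟩
  refine ⟨δ/4, by linarith, ?_⟩
  intro Ψ hΨ
  have hcl : ∀ j x, |Ψ j x - Φ j x| ≤ δ/4 := by
    intro j x
    rw [← Real.dist_eq]
    exact (ContinuousMap.dist_apply_le_dist x).trans ((dist_le_pi_dist Ψ Φ j).trans hΨ.le)
  refine ⟨σ, hσ, B, hB, δ/2, by linarith, ?_⟩
  intro q q' hq x hx y hy
  have h1 := h q q' hq x hx y hy
  have h2 := abs_le.1 (hcl q.1 x)
  have h3 := abs_le.1 (hcl q'.1 y)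
  rcases le_abs.1 h1 with h4 | h4
  · exact le_abs.2 (Or.inl (by linarith))
  · exact le_abs.2 (Or.inr (by linarith))

lemma sepSet_dense (K : Type*) [MetricSpace K] [CompactSpace K] (m n : ℕ)
    (hd : CovDimLE K n) (ε : ℝ) (hε : 0 < ε) :
    Dense (SepSet K m n ε) := by
  classical
  rw [Metric.dense_iff]
  intro Φ r hr
  have huc : UniformContinuous fun x : K => fun j => Φ j x :=
    CompactSpace.uniformContinuous_of_continuous (continuous_pi fun j => (Φ j).continuous)
  obtain ⟨ε', hε', hunif⟩ := Metric.uniformContinuous_iff.1 huc (r/4) (by linarith)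
  obtain ⟨σ, hσ, B, hB⟩ := exists_goodFam m n hd (min ε ε') (lt_min hε hε')
  have hpt : ∃ a : Fin m × σ → ℝ, ∀ q, ∀ x ∈ B q.1 q.2, |a q - Φ q.1 x| ≤ r/4 := by
    have : ∀ q : Fin m × σ, ∃ a : ℝ, ∀ x ∈ B q.1 q.2, |a - Φ q.1 x| ≤ r/4 := by
      intro q
      rcases (B q.1 q.2).eq_empty_or_nonempty with h | ⟨z, hz⟩
      · exact ⟨0, by simp [h]⟩
      · refine ⟨Φ q.1 z, fun x hx => ?_⟩
        have h1 := hunif ((hB.2.2.1 q.1 q.2 z hz x hx).trans_le (min_le_right _ _))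
        rw [← Real.dist_eq]
        exact (dist_le_pi_dist (fun j => Φ j z) (fun j => Φ j x) q.1).trans h1.le
    choose a ha using this
    exact ⟨a, ha⟩
  obtain ⟨a, ha⟩ := hpt
  obtain ⟨c, hci, hca⟩ := exists_inj_near a (r/4) (by linarith)
  have hbd : ∃ M : ℝ, 0 ≤ M ∧ ∀ q, |c q| ≤ M := by
    haveI := Fintype.ofFinite σ
    exact ⟨∑ q, |c q|, Finset.sum_nonneg fun _ _ => abs_nonneg _, fun q =>
      Finset.single_le_sum (f := fun q => |c q|) (fun _ _ => abs_nonneg _) (Finset.mem_univ q)⟩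
  obtain ⟨M, hM, hcM⟩ := hbd
  have hψ : ∀ j, ∃ g : C(K, ℝ), (∀ s, ∀ x ∈ B j s, g x = c (j, s)) ∧ ∀ x, |g x| ≤ M := fun j =>
    glue (B j) (hB.1 j) (hB.2.1 j) (fun s => c (j, s)) M hM (fun s => hcM _)
  choose ψ hψ1 hψ2 using hψ
  let Ψ : Fin m → C(K, ℝ) := fun j =>
    ⟨fun x => max (Φ j x - r/2) (min (Φ j x + r/2) (ψ j x)), by fun_prop⟩
  have hΨc : ∀ q : Fin m × σ, ∀ x ∈ B q.1 q.2, Ψ q.1 x = c q := by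
    intro q x hx
    show max (Φ q.1 x - r/2) (min (Φ q.1 x + r/2) (ψ q.1 x)) = c q
    have h1 : ψ q.1 x = c q := hψ1 q.1 q.2 x hx
    have h2 := abs_le.1 (ha q x hx)
    have h3 := abs_le.1 (hca q)
    rw [h1, min_eq_right (by linarith), max_eq_right (by linarith)]
  refine ⟨Ψ, ?_, σ, hσ, B, ?_, ?_⟩
  · rw [Metric.mem_ball]
    refine lt_of_le_of_lt ((dist_pi_le_iff (by linarith : 0 ≤ r/2)).2 fun j => ?_) (by linarith : r/2 < r)
    rw [ContinuousMap.dist_le (by linarith)]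
    intro x
    rw [Real.dist_eq, abs_le]
    show _ ≤ max (Φ j x - r/2) (min (Φ j x + r/2) (ψ j x)) - _ ∧
      max (Φ j x - r/2) (min (Φ j x + r/2) (ψ j x)) - _ ≤ _
    constructor
    · linarith [le_max_left (Φ j x - r/2) (min (Φ j x + r/2) (ψ j x))]
    · have : max (Φ j x - r/2) (min (Φ j x + r/2) (ψ j x)) ≤ Φ j x + r/2 :=
        max_le (by linarith) (min_le_left _ _)
      linarith
  · exact ⟨hB.1, hB.2.1, fun j s x hx y hy =>
      (hB.2.2.1 j s x hx y hy).trans_le (min_le_left _ _), hB.2.2.2⟩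
  · obtain ⟨δ, hδ, h⟩ : ∃ δ > 0, ∀ q q', q ≠ q' → δ ≤ |c q - c q'| := by
      haveI := Fintype.ofFinite σ
      have hev : ∀ᶠ δ in nhdsWithin (0:ℝ) (Ioi 0), ∀ q q', q ≠ q' → δ ≤ |c q - c q'| := by
        rw [Filter.eventually_all]; intro q
        rw [Filter.eventually_all]; intro q'
        by_cases hq : q = q'
        · exact Filter.Eventually.of_forall fun _ h => absurd hq h
        · have : 0 < |c q - c q'| := abs_pos.2 (sub_ne_zero.2 fun h => hq (hci h))
          filter_upwards [Ioo_mem_nhdsGT this] with δ hδ _ using hδ.2.le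
      obtain ⟨δ, h1, h2⟩ := (hev.and self_mem_nhdsWithin).exists
      exact ⟨δ, h2, h1⟩
    refine ⟨δ, hδ, fun q q' hq x hx y hy => ?_⟩
    rw [hΨc q x hx, hΨc q' y hy]
    exact h q q' hq

/-- The averaging operator. -/
def avgOp {K : Type*} [TopologicalSpace K] {m : ℕ}
    (θ : Fin m → C(K, unitInterval)) : C(unitInterval, ℝ) →ₗ[ℝ] C(K, ℝ) where
  toFun g := (m:ℝ)⁻¹ • ∑ j, g.comp (θ j)
  map_add' g h := by
    ext x
    simp [ContinuousMap.sum_apply, Finset.sum_add_distrib, mul_add]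
  map_smul' r g := by
    ext x
    simp only [ContinuousMap.coe_smul, Pi.smul_apply, ContinuousMap.sum_apply,
      ContinuousMap.comp_apply, smul_eq_mul, RingHom.id_apply, ← Finset.mul_sum]
    ring

lemma avgOp_apply {K : Type*} [TopologicalSpace K] {m : ℕ}
    (θ : Fin m → C(K, unitInterval)) (g : C(unitInterval, ℝ)) (x : K) :
    avgOp θ g x = (m:ℝ)⁻¹ * ∑ j, g (θ j x) := by
  simp [avgOp, ContinuousMap.sum_apply]

lemma avgOp_cont {K : Type*} [TopologicalSpace K] {m : ℕ}
    (θ : Fin m → C(K, unitInterval)) :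
    @Continuous _ _ (ptTop unitInterval) (ptTop K) (avgOp θ) := by
  letI t1 : TopologicalSpace C(unitInterval, ℝ) := ptTop unitInterval
  refine continuous_induced_rng.2 ?_
  refine continuous_pi fun x => ?_
  have h : ∀ y : unitInterval, @Continuous _ _ (ptTop unitInterval) _
      (fun g : C(unitInterval, ℝ) => g y) := fun y =>
    (continuous_apply y).comp continuous_induced_dom
  have h2 : @Continuous _ _ (ptTop unitInterval) _
      (fun g : C(unitInterval, ℝ) => (m:ℝ)⁻¹ * ∑ j, g (θ j x)) :=
    continuous_const.mul (continuous_finset_sum _ fun j _ => h (θ j x))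
  simpa only [Function.comp_def, avgOp_apply] using h2

lemma avgOp_norm {K : Type*} [TopologicalSpace K] [CompactSpace K] {m : ℕ}
    (θ : Fin m → C(K, unitInterval)) (g : C(unitInterval, ℝ)) : ‖avgOp θ g‖ ≤ ‖g‖ := by
  rw [ContinuousMap.norm_le _ (norm_nonneg _)]
  intro x
  rw [avgOp_apply, norm_mul, norm_inv, Real.norm_natCast]
  have h1 : ‖∑ j, g (θ j x)‖ ≤ m * ‖g‖ := by
    refine (norm_sum_le _ _).trans ((Finset.sum_le_sum fun j _ => g.norm_coe_le_norm (θ j x)).trans ?_)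
    simp
  rcases Nat.eq_zero_or_pos m with rfl | hm
  · simp
  · have : (0:ℝ) < m := by exact_mod_cast hm
    rw [inv_mul_le_iff₀ this]
    exact h1

lemma iterate_approx {E F : Type*} [NormedAddCommGroup E] [NormedSpace ℝ E] [CompleteSpace E]
    [NormedAddCommGroup F] [NormedSpace ℝ F] (L : E →ₗ[ℝ] F) (hL : ∀ g, ‖L g‖ ≤ ‖g‖)
    (q : ℝ) (hq0 : 0 ≤ q) (hq : q < 1)
    (h : ∀ f, ∃ g, ‖g‖ ≤ ‖f‖ ∧ ‖f - L g‖ ≤ q * ‖f‖) (f : F) :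
    ∃ g, L g = f ∧ ‖g‖ ≤ (1 - q)⁻¹ * ‖f‖ := by
  choose s hs1 hs2 using h
  let L' : E →L[ℝ] F := L.mkContinuous 1 (by simpa using hL)
  let r : ℕ → F := fun k => (fun v => v - L (s v))^[k] f
  have hr0 : r 0 = f := rfl
  have hr : ∀ k, r (k+1) = r k - L (s (r k)) := fun k => Function.iterate_succ_apply' _ _ _
  have hrn : ∀ k, ‖r k‖ ≤ q^k * ‖f‖ := by
    intro k
    induction k with
    | zero => simp [hr0]
    | succ k ih =>
      rw [hr, pow_succ']
      refine (hs2 _).trans ?_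
      rw [mul_assoc]
      gcongr
  have hgeo : HasSum (fun k => q^k * ‖f‖) ((1-q)⁻¹ * ‖f‖) :=
    (hasSum_geometric_of_lt_one hq0 hq).mul_right _
  have hsn : ∀ k, ‖s (r k)‖ ≤ q^k * ‖f‖ := fun k => (hs1 _).trans (hrn k)
  have hsum : Summable fun k => s (r k) := Summable.of_norm_bounded hgeo.summable hsn
  refine ⟨∑' k, s (r k), ?_, tsum_of_norm_bounded hgeo hsn⟩
  have h1 : HasSum (fun k => L' (s (r k))) (L' (∑' k, s (r k))) := L'.hasSum hsum.hasSum
  have h2 := h1.tendsto_sum_nat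
  have h3 : ∀ N, ∑ k ∈ Finset.range N, L' (s (r k)) = f - r N := by
    intro N
    induction N with
    | zero => simp [hr0]
    | succ N ih =>
      rw [Finset.sum_range_succ, ih, hr]
      show f - r N + L (s (r N)) = _
      abel
  simp only [h3] at h2
  have h4 : Filter.Tendsto r Filter.atTop (nhds 0) :=
    squeeze_zero_norm hrn hgeo.summable.tendsto_atTop_zero
  have h5 : Filter.Tendsto (fun N => f - r N) Filter.atTop (nhds (f - 0)) :=
    tendsto_const_nhds.sub h4
  have := tendsto_nhds_unique h2 h5
  rw [sub_zero] at this
  exact this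

lemma exists_theta (K : Type*) [MetricSpace K] [CompactSpace K] (m n : ℕ)
    (hd : CovDimLE K n) : ∃ θ : Fin m → C(K, unitInterval),
    ∀ ε > 0, ∃ (σ : Type) (_ : Finite σ) (B : Fin m → σ → Set K), GoodFam m n ε B ∧
      ∀ q q' : Fin m × σ, q ≠ q' → Disjoint (θ q.1 '' B q.1 q.2) (θ q'.1 '' B q'.1 q'.2) := by
  have hdense := dense_iInter_of_isOpen
    (f := fun N : ℕ => SepSet K m n (1/((N:ℝ)+1))) (fun N => sepSet_open K m n _)
    (fun N => sepSet_dense K m n hd _ (by positivity))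
  obtain ⟨Φ, hΦ⟩ := hdense.nonempty
  rw [mem_iInter] at hΦ
  let R : ℝ := ‖Φ‖ + 1
  have hR : 0 < R := by positivity
  have hΦR : ∀ j x, |Φ j x| ≤ R := fun j x =>
    ((Φ j).norm_coe_le_norm x).trans ((norm_le_pi_norm Φ j).trans (by simp [R]))
  let θ : Fin m → C(K, unitInterval) := fun j =>
    ⟨fun x => ⟨(Φ j x + R)/(2*R), by
      have := abs_le.1 (hΦR j x)
      constructor
      · apply div_nonneg <;> linarith
      · rw [div_le_one (by linarith)]; linarith⟩, by fun_prop⟩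
  refine ⟨θ, fun ε hε => ?_⟩
  obtain ⟨N, hN⟩ := exists_nat_one_div_lt hε
  obtain ⟨σ, hσ, B, hB, δ, hδ, h⟩ := hΦ N
  refine ⟨σ, hσ, B, ⟨hB.1, hB.2.1, fun j s x hx y hy =>
      (hB.2.2.1 j s x hx y hy).trans hN, hB.2.2.2⟩, fun q q' hq => ?_⟩
  rw [Set.disjoint_left]
  rintro _ ⟨x, hx, rfl⟩ ⟨y, hy, hxy⟩
  have h1 := h q q' hq x hx y hy
  have h2 : (Φ q'.1 y + R)/(2*R) = (Φ q.1 x + R)/(2*R) := congrArg Subtype.val hxy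
  have h3 : Φ q'.1 y + R = Φ q.1 x + R := (div_left_inj' (by positivity)).1 h2
  have h4 : Φ q.1 x - Φ q'.1 y = 0 := by linarith
  rw [h4, abs_zero] at h1
  linarith

lemma approx_step {K : Type*} [MetricSpace K] [CompactSpace K] {m n : ℕ} (hm : 0 < m)
    (θ : Fin m → C(K, unitInterval))
    (hθ : ∀ ε > 0, ∃ (σ : Type) (_ : Finite σ) (B : Fin m → σ → Set K), GoodFam m n ε B ∧
      ∀ q q' : Fin m × σ, q ≠ q' → Disjoint (θ q.1 '' B q.1 q.2) (θ q'.1 '' B q'.1 q'.2))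
    (η : ℝ) (hη : 0 < η) (f : C(K, ℝ)) :
    ∃ g, ‖g‖ ≤ ‖f‖ ∧ ‖f - avgOp θ g‖ ≤ (η + 2*((n:ℝ)+1)/m) * ‖f‖ := by
  classical
  rcases eq_or_ne f 0 with rfl | hf
  · exact ⟨0, by simp⟩
  have hfp : 0 < ‖f‖ := norm_pos_iff.2 hf
  obtain ⟨ε, hε, hunif⟩ := Metric.uniformContinuous_iff.1
    (CompactSpace.uniformContinuous_of_continuous f.continuous) (η * ‖f‖) (by positivity)
  obtain ⟨σ, hσ, B, hB, hdis⟩ := hθ ε hε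
  have : ∀ q : Fin m × σ, ∃ a : ℝ, |a| ≤ ‖f‖ ∧ ∀ x ∈ B q.1 q.2, |f x - a| ≤ η * ‖f‖ := by
    intro q
    rcases (B q.1 q.2).eq_empty_or_nonempty with h | ⟨z, hz⟩
    · exact ⟨0, by simp, by simp [h]⟩
    · refine ⟨f z, f.norm_coe_le_norm z, fun x hx => ?_⟩
      rw [← Real.dist_eq]
      exact (hunif (hB.2.2.1 q.1 q.2 x hx z hz)).le
  choose a ha1 ha2 using this
  obtain ⟨g, hg1, hg2⟩ := glue (fun q : Fin m × σ => θ q.1 '' B q.1 q.2)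
    (fun q => ((hB.1 q.1 q.2).isCompact.image (θ q.1).continuous).isClosed) hdis a ‖f‖
    (norm_nonneg _) ha1
  refine ⟨g, (ContinuousMap.norm_le _ (norm_nonneg _)).2 hg2, ?_⟩
  rw [ContinuousMap.norm_le _ (by positivity)]
  intro x
  have hm' : (0:ℝ) < m := by exact_mod_cast hm
  have h1 : (f - avgOp θ g) x = (m:ℝ)⁻¹ * ∑ j, (f x - g (θ j x)) := by
    rw [ContinuousMap.sub_apply, avgOp_apply, Finset.sum_sub_distrib]
    simp
    field_simp
  rw [h1, norm_mul, norm_inv, Real.norm_natCast, inv_mul_le_iff₀ hm']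
  let bad : Finset (Fin m) := Finset.univ.filter fun j => ∀ s, x ∉ B j s
  have hbad : (bad.card : ℝ) ≤ n + 1 := by
    have := hB.2.2.2 x
    rw [Set.ncard_eq_toFinset_card'] at this
    have h2 : bad.card ≤ n + 1 := by
      convert this using 2
      ext j; simp [bad]
    exact_mod_cast h2
  have hterm : ∀ j, ‖f x - g (θ j x)‖ ≤ η * ‖f‖ + if j ∈ bad then 2 * ‖f‖ else 0 := by
    intro j
    split_ifs with hj
    · have h2 := f.norm_coe_le_norm x
      have h3 := hg2 (θ j x)
      have h4 := norm_sub_le (f x) (g (θ j x))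
      rw [← Real.norm_eq_abs] at h3
      have : 0 ≤ η * ‖f‖ := by positivity
      linarith
    · simp only [bad, Finset.mem_filter, Finset.mem_univ, true_and, not_forall, not_not] at hj
      obtain ⟨s, hs⟩ := hj
      rw [hg1 (j, s) _ ⟨x, hs, rfl⟩, add_zero, Real.norm_eq_abs]
      exact ha2 (j, s) x hs
  refine (norm_sum_le _ _).trans ((Finset.sum_le_sum fun j _ => hterm j).trans ?_)
  rw [Finset.sum_add_distrib, Finset.sum_ite_mem]
  simp only [Finset.sum_const, Finset.univ_inter, Finset.card_univ, Fintype.card_fin, nsmul_eq_mul]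
  have h5 : (m:ℝ) * ((η + 2*((n:ℝ)+1)/m) * ‖f‖) = m * (η * ‖f‖) + ((n:ℝ)+1) * (2 * ‖f‖) := by
    field_simp
  rw [h5]
  gcongr

/-- for each `c > 1` and each nonempty compact metrizable finite
dimensional `K` there is a c-good map of `C_p(I)` onto `C_p(K)`. -/
theorem exists_cGood_unitInterval_to_finDim (c : ℝ) (hc : 1 < c)
    (K : Type*) [TopologicalSpace K] [CompactSpace K]
    [TopologicalSpace.MetrizableSpace K] [Nonempty K] (hfd : FinDimSpace K) :
    ∃ L : C(unitInterval, ℝ) →ₗ[ℝ] C(K, ℝ), IsCGoodMap c L ∧ Surjective L := by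
  classical
  letI : MetricSpace K := TopologicalSpace.metrizableSpaceMetric K
  obtain ⟨n, hn⟩ := hfd
  have hc0 : 0 < c := by linarith
  let d : ℝ := 1 - c⁻¹
  have hd : 0 < d := sub_pos.2 (inv_lt_one_of_one_lt₀ hc)
  obtain ⟨m, hm⟩ := exists_nat_gt (4*((n:ℝ)+1)/d)
  have hm0 : (0:ℝ) < m := lt_trans (by positivity) hm
  obtain ⟨θ, hθ⟩ := exists_theta K m n hn
  have hq : d/2 + 2*((n:ℝ)+1)/m ≤ d := by
    rw [div_lt_iff₀ hd] at hm
    have : 2*((n:ℝ)+1)/m ≤ d/2 := by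
      rw [div_le_iff₀ hm0]; linarith
    linarith
  have key : ∀ f : C(K, ℝ), ∃ g, avgOp θ g = f ∧ ‖g‖ ≤ c * ‖f‖ := by
    intro f
    have h := iterate_approx (avgOp θ) (avgOp_norm θ) d hd.le
      (by have := inv_pos.2 hc0; show 1 - c⁻¹ < 1; linarith) (fun f => by
        obtain ⟨g, h1, h2⟩ := approx_step (by exact_mod_cast hm0) θ hθ (d/2) (by linarith) f
        exact ⟨g, h1, h2.trans (by gcongr)⟩) f
    simpa [d] using h
  exact ⟨avgOp θ, ⟨avgOp_cont θ, avgOp_norm θ, key⟩, fun f => (key f).imp fun _ h => h.1⟩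

end
end
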